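/- arXiv:1008.2449 — 3 statements merged into one kernel-verified Lean document; each statement's English description precedes it below -/
import Mathlib

section
/- Let X be a locally compact Hausdorff space and let ζ, ζ' be quasi-integrals on X whose induced set functions coincide, i.e. τ_ζ(A) = τ_{ζ'}(A) for all A ∈ 𝒜(X). Then ζ = ζ' as functionals on C_c(X). -/
/-!
Quasi-linearity gives `ζ f = ζ f⁺ - ζ f⁻`, so it suffices to treat `f ≥ 0`. For `δ > 0`, cut `f` into
the layers `fₖ = min (max (f - kδ) 0) δ`. With `Kₖ = {f ≥ kδ}`, compact for `k ≥ 1`, we have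
`δ 1_{Kₖ₊₁} ≤ fₖ ≤ δ 1_{Kₖ}`, hence (`toFun_layer_le`, `le_toFun_layer`)
`ζ fₖ₊₁ ≤ δ τ(Kₖ₊₁) ≤ ζ' fₖ`. Since `min f ((k+1)δ) = min f (kδ) + fₖ` and `ζ` is additive on functions of
`f`, summing these inequalities (`toFun_trunc_le`) gives
`ζ (min f ((k+1)δ)) ≤ ζ (min f δ) + ζ' (min f (kδ))`. By Lipschitz continuity `ζ (min f δ) ≤ N δ` with `N`
independent of `δ`. Taking `k` large and then letting `δ → 0` yields `ζ f ≤ ζ' f`, and the reverse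
inequality holds by symmetry. Only the values of `τ` on compact sets are used.
-/

open Set Topology
open scoped CompactlySupported

noncomputable section

/-- The family `𝒜(X)` of admissible sets: compact sets together with
open sets with compact closure. -/
def Admissible (X : Type*) [TopologicalSpace X] : Set (Set X) :=
  {A | IsCompact A ∨ (IsOpen A ∧ IsCompact (closure A))}

/-- A quasi-integral on `X`: a monotone, locally Lipschitz (w.r.t. the uniform norm,
on functions with support in a fixed compact set) functional on `C_c(X, ℝ)` which is
linear on every subspace of the form `{φ ∘ f | φ ∈ C(ℝ), φ 0 = 0}`. -/
structure QuasiIntegral (X : Type*) [TopologicalSpace X] where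
  toFun : C_c(X, ℝ) → ℝ
  mono' : ∀ f g : C_c(X, ℝ), (∀ x, f x ≤ g x) → toFun f ≤ toFun g
  lipschitz' : ∀ K : Set X, IsCompact K → ∃ N : ℝ, 0 ≤ N ∧
    ∀ f g : C_c(X, ℝ), tsupport ⇑f ⊆ K → tsupport ⇑g ⊆ K →
      |toFun f - toFun g| ≤ N * ⨆ x, |f x - g x|
  quasilin_add' : ∀ (f : C_c(X, ℝ)) (φ ψ : ℝ → ℝ), Continuous φ → Continuous ψ →
    φ 0 = 0 → ψ 0 = 0 → ∀ gφ gψ gs : C_c(X, ℝ),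
    (∀ x, gφ x = φ (f x)) → (∀ x, gψ x = ψ (f x)) →
    (∀ x, gs x = φ (f x) + ψ (f x)) → toFun gs = toFun gφ + toFun gψ
  quasilin_smul' : ∀ (f : C_c(X, ℝ)) (φ : ℝ → ℝ), Continuous φ → φ 0 = 0 →
    ∀ (c : ℝ) (gφ gc : C_c(X, ℝ)),
    (∀ x, gφ x = φ (f x)) → (∀ x, gc x = c * φ (f x)) → toFun gc = c * toFun gφ

/-- A topological measure on `X` (normalized to vanish on non-admissible sets):
a nonnegative, additive, monotone, regular set function on `𝒜(X)`. -/
structure TopMeasure (X : Type*) [TopologicalSpace X] where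
  toFun : Set X → ℝ
  zero_of_not_mem' : ∀ A : Set X, A ∉ Admissible X → toFun A = 0
  nonneg' : ∀ A : Set X, 0 ≤ toFun A
  additive' : ∀ A A' : Set X, A ∈ Admissible X → A' ∈ Admissible X →
    A ∪ A' ∈ Admissible X → Disjoint A A' → toFun (A ∪ A') = toFun A + toFun A'
  mono' : ∀ A A' : Set X, A ∈ Admissible X → A' ∈ Admissible X → A ⊆ A' →
    toFun A ≤ toFun A'
  outer_reg' : ∀ K : Set X, IsCompact K →
    toFun K = sInf (toFun '' {O : Set X | IsOpen O ∧ IsCompact (closure O) ∧ K ⊆ O})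
  inner_reg' : ∀ O : Set X, IsOpen O → IsCompact (closure O) →
    toFun O = sSup (toFun '' {K : Set X | IsCompact K ∧ K ⊆ O})

variable {X : Type*} [TopologicalSpace X]

/-- `τ_ζ(K) = inf {ζ(f) | f ∈ C_c(X), f ≥ 1_K}`, for `K` compact. -/
def tauCompact (ζ : QuasiIntegral X) (K : Set X) : ℝ :=
  sInf (ζ.toFun '' {f : C_c(X, ℝ) | ∀ x, K.indicator (fun _ => (1 : ℝ)) x ≤ f x})

/-- `τ_ζ(O) = sup {ζ(f) | f ∈ C_c(X), f ≤ 1_O}`, for `O` open with compact closure. -/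
def tauOpen (ζ : QuasiIntegral X) (O : Set X) : ℝ :=
  sSup (ζ.toFun '' {f : C_c(X, ℝ) | ∀ x, f x ≤ O.indicator (fun _ => (1 : ℝ)) x})

open scoped Classical in
/-- The induced set function `τ_ζ` of a quasi-integral `ζ`. -/
def inducedSetFun (ζ : QuasiIntegral X) (A : Set X) : ℝ :=
  if IsCompact A then tauCompact ζ A
  else if IsOpen A ∧ IsCompact (closure A) then tauOpen ζ A
  else 0

/-- The composition `φ ∘ f` as an element of `C_c(X, ℝ)`; it is `φ ∘ f` only when `φ 0 = 0`. -/
def compFun (φ : ℝ → ℝ) (hφ : Continuous φ) (f : C_c(X, ℝ)) : C_c(X, ℝ) :=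
  CompactlySupportedContinuousMap.compLeft ⟨φ, hφ⟩ f

lemma compFun_apply {φ : ℝ → ℝ} (hφ : Continuous φ) (h0 : φ 0 = 0) (f : C_c(X, ℝ)) (x : X) :
    compFun φ hφ f x = φ (f x) :=
  CompactlySupportedContinuousMap.compLeft_apply (g := ⟨φ, hφ⟩) h0 f x

lemma continuous_trunc (a : ℝ) : Continuous fun t : ℝ => min t a := by fun_prop

lemma continuous_layer (a δ : ℝ) : Continuous fun t : ℝ => min (max (t - a) 0) δ := by fun_prop

/-- The truncation `min f a`, for `a ≥ 0`. -/
def trunc (a : ℝ) (f : C_c(X, ℝ)) : C_c(X, ℝ) := compFun _ (continuous_trunc a) f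

/-- The layer of `f` between heights `a` and `a + δ`, for `a, δ ≥ 0`. -/
def layer (a δ : ℝ) (f : C_c(X, ℝ)) : C_c(X, ℝ) := compFun _ (continuous_layer a δ) f

lemma trunc_apply {a : ℝ} (ha : 0 ≤ a) (f : C_c(X, ℝ)) (x : X) :
    trunc a f x = min (f x) a :=
  compFun_apply (continuous_trunc a) (by simpa using ha) f x

lemma layer_apply {a δ : ℝ} (ha : 0 ≤ a) (hδ : 0 ≤ δ) (f : C_c(X, ℝ)) (x : X) :
    layer a δ f x = min (max (f x - a) 0) δ :=
  compFun_apply (continuous_layer a δ) (by simp [ha, hδ]) f x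

lemma QuasiIntegral.toFun_smul (ζ : QuasiIntegral X) (c : ℝ) (f : C_c(X, ℝ)) :
    ζ.toFun (c • f) = c * ζ.toFun f :=
  ζ.quasilin_smul' f id continuous_id rfl c f (c • f) (fun _ => rfl) (fun _ => by simp)

lemma QuasiIntegral.toFun_zero (ζ : QuasiIntegral X) : ζ.toFun 0 = 0 := by
  simpa using ζ.toFun_smul 0 0

lemma QuasiIntegral.toFun_trunc_add (ζ : QuasiIntegral X) {a δ : ℝ} (ha : 0 ≤ a) (hδ : 0 ≤ δ)
    (f : C_c(X, ℝ)) :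
    ζ.toFun (trunc (a + δ) f) = ζ.toFun (trunc a f) + ζ.toFun (layer a δ f) := by
  refine ζ.quasilin_add' f _ _ (continuous_trunc a) (continuous_layer a δ) (by simpa using ha)
    (by simp [ha, hδ]) _ _ _ (trunc_apply ha f) (layer_apply ha hδ f) fun x => ?_
  rw [trunc_apply (by positivity)]
  grind

lemma isCompact_superlevel (f : C_c(X, ℝ)) {a : ℝ} (ha : 0 < a) : IsCompact {x | a ≤ f x} := by
  refine IsCompact.of_isClosed_subset f.hasCompactSupport.isCompact
    (isClosed_le continuous_const f.continuous) fun x hx => subset_tsupport _ ?_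
  have hx' : a ≤ f x := hx
  exact (ha.trans_le hx').ne'

/-- The layer starting at height `a` is dominated by `δ 1_K`, where `K = {f ≥ a}`. -/
lemma toFun_layer_le (ζ : QuasiIntegral X) {a δ : ℝ} (ha : 0 < a) (hδ : 0 < δ) (f : C_c(X, ℝ)) :
    ζ.toFun (layer a δ f) ≤ δ * tauCompact ζ {x | a ≤ f x} := by
  rw [← div_le_iff₀' hδ]
  refine le_csInf ?_ ?_
  · -- `f⁺ / a` dominates `1_K`, so the infimum is over a nonempty set
    refine ⟨_, compFun (fun t => max (t / a) 0) (by fun_prop) f, fun x => ?_, rfl⟩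
    rw [compFun_apply _ (by simp)]
    by_cases hx : a ≤ f x
    · simp [indicator, hx, (one_le_div ha).2 hx]
    · simp [indicator, hx]
  · rintro _ ⟨g, hg, rfl⟩
    rw [div_eq_inv_mul, ← ζ.toFun_smul]
    refine ζ.mono' _ _ fun x => le_trans ?_ (hg x)
    simp only [CompactlySupportedContinuousMap.smul_apply, layer_apply ha.le hδ.le, smul_eq_mul]
    rw [inv_mul_le_iff₀ hδ]
    by_cases hx : a ≤ f x
    · simp [indicator, hx]
    · simp [indicator, hx, (not_le.1 hx).le]

/-- The layer between heights `a` and `a + δ` dominates `δ 1_K`, where `K = {f ≥ a + δ}`. -/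
lemma le_toFun_layer (ζ : QuasiIntegral X) {a δ : ℝ} (ha : 0 ≤ a) (hδ : 0 < δ) (f : C_c(X, ℝ)) :
    δ * tauCompact ζ {x | a + δ ≤ f x} ≤ ζ.toFun (layer a δ f) := by
  rw [← le_div_iff₀' hδ, div_eq_inv_mul, ← ζ.toFun_smul]
  refine csInf_le ⟨0, ?_⟩ ⟨_, fun x => ?_, rfl⟩
  · rintro _ ⟨g, hg, rfl⟩
    rw [← ζ.toFun_zero]
    exact ζ.mono' _ _ fun x => (indicator_nonneg (fun _ _ => zero_le_one) x).trans (hg x)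
  · simp only [CompactlySupportedContinuousMap.smul_apply, layer_apply ha hδ.le, smul_eq_mul]
    rw [le_inv_mul_iff₀ hδ]
    by_cases hx : a + δ ≤ f x
    · simp only [indicator, mem_ofPred_eq, hx, if_true, mul_one]
      grind
    · simp [indicator, hx, hδ.le]

/-- Raising the truncation level by `δ` in `ζ` compensates, up to the bottom layer, for passing
from `ζ'` to `ζ`. -/
lemma toFun_trunc_le (ζ ζ' : QuasiIntegral X)
    (h : ∀ K : Set X, IsCompact K → tauCompact ζ K = tauCompact ζ' K)
    (f : C_c(X, ℝ)) (hf : ∀ x, 0 ≤ f x) {δ : ℝ} (hδ : 0 < δ) (k : ℕ) :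
    ζ.toFun (trunc (k * δ + δ) f) ≤ ζ.toFun (trunc δ f) + ζ'.toFun (trunc (k * δ) f) := by
  induction k with
  | zero =>
    have h0 : (0 : ℝ) ≤ ζ'.toFun (trunc (((0 : ℕ) : ℝ) * δ) f) := by
      rw [← ζ'.toFun_zero]
      refine ζ'.mono' _ _ fun x => ?_
      rw [trunc_apply (by simp)]
      simp [hf x]
    simpa using h0
  | succ k ih =>
    have hk : 0 ≤ (k : ℝ) * δ := by positivity
    have hk' : 0 < (k : ℝ) * δ + δ := by positivity
    have hcast : ((k + 1 : ℕ) : ℝ) * δ = k * δ + δ := by push_cast; ring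
    rw [hcast, ζ.toFun_trunc_add hk'.le hδ.le, ζ'.toFun_trunc_add hk hδ.le]
    have h1 := toFun_layer_le ζ hk' hδ f
    have h2 := le_toFun_layer ζ' hk hδ f
    rw [h _ (isCompact_superlevel f hk')] at h1
    linarith

lemma exists_toFun_trunc_le (ζ : QuasiIntegral X) (f : C_c(X, ℝ)) (hf : ∀ x, 0 ≤ f x) :
    ∃ N : ℝ, 0 ≤ N ∧ ∀ δ : ℝ, 0 < δ → ζ.toFun (trunc δ f) ≤ N * δ := by
  obtain ⟨N, hN, hL⟩ := ζ.lipschitz' (tsupport f) f.hasCompactSupport.isCompact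
  refine ⟨N, hN, fun δ hδ => ?_⟩
  have h1 := hL (trunc δ f) 0 ?_ ?_
  · rw [ζ.toFun_zero, sub_zero] at h1
    refine (le_abs_self _).trans (h1.trans (mul_le_mul_of_nonneg_left ?_ hN))
    refine Real.iSup_le (fun x => ?_) hδ.le
    rw [trunc_apply hδ.le, CompactlySupportedContinuousMap.zero_apply, sub_zero,
      abs_of_nonneg (le_min (hf x) hδ.le)]
    exact min_le_right _ _
  · refine closure_mono fun x hx hfx => hx ?_
    rw [trunc_apply hδ.le, hfx]
    simp [hδ.le]
  · refine closure_minimal (fun x hx => (hx rfl).elim) (isClosed_tsupport _)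

lemma toFun_le_of_nonneg (ζ ζ' : QuasiIntegral X)
    (h : ∀ K : Set X, IsCompact K → tauCompact ζ K = tauCompact ζ' K)
    (f : C_c(X, ℝ)) (hf : ∀ x, 0 ≤ f x) : ζ.toFun f ≤ ζ'.toFun f := by
  obtain ⟨N, hN, hL⟩ := exists_toFun_trunc_le ζ f hf
  obtain ⟨C, hC⟩ := f.hasCompactSupport.exists_bound_of_continuous f.continuous
  refine le_of_forall_pos_le_add fun ε hε => ?_
  set δ := ε / (N + 1) with hδdef
  have hδ : 0 < δ := by positivity
  have hNδ : N * δ ≤ ε := by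
    rw [hδdef, mul_div_assoc', div_le_iff₀ (by positivity)]
    nlinarith
  obtain ⟨k, hk⟩ := exists_nat_ge (C / δ)
  rw [div_le_iff₀ hδ] at hk
  have h1 : ζ.toFun f ≤ ζ.toFun (trunc (k * δ + δ) f) := by
    refine ζ.mono' _ _ fun x => ?_
    rw [trunc_apply (by positivity)]
    have := (le_abs_self _).trans (hC x)
    exact le_min le_rfl (by linarith)
  have h2 : ζ'.toFun (trunc (k * δ) f) ≤ ζ'.toFun f := by
    refine ζ'.mono' _ _ fun x => ?_
    rw [trunc_apply (by positivity)]
    exact min_le_left _ _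
  have h3 := toFun_trunc_le ζ ζ' h f hf hδ k
  have h4 := hL δ hδ
  linarith

lemma continuous_posPart_real : Continuous fun t : ℝ => max t 0 := by fun_prop

lemma continuous_negPart_real : Continuous fun t : ℝ => max (-t) 0 := by fun_prop

lemma QuasiIntegral.toFun_eq_pos_sub_neg (ζ : QuasiIntegral X) (f : C_c(X, ℝ)) :
    ζ.toFun f = ζ.toFun (compFun _ continuous_posPart_real f)
      - ζ.toFun (compFun _ continuous_negPart_real f) := by
  have h1 := ζ.quasilin_add' f (fun t => max t 0) (fun t => -max (-t) 0) continuous_posPart_real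
    continuous_negPart_real.neg (by simp) (by simp) (compFun _ continuous_posPart_real f)
    ((-1 : ℝ) • compFun _ continuous_negPart_real f) f
    (compFun_apply _ (by simp) f)
    (fun x => by simp [compFun_apply continuous_negPart_real]) (fun x => by grind)
  rw [h1, ζ.toFun_smul]
  ring

/-- two quasi-integrals whose induced set functions coincide on
`𝒜(X)` are equal. -/
theorem quasiIntegral_eq_of_inducedSetFun_eq {X : Type*} [TopologicalSpace X]
    [T2Space X] [LocallyCompactSpace X] (ζ ζ' : QuasiIntegral X)
    (h : ∀ A ∈ Admissible X, inducedSetFun ζ A = inducedSetFun ζ' A) :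
    ∀ f : C_c(X, ℝ), ζ.toFun f = ζ'.toFun f := by
  have hK : ∀ K : Set X, IsCompact K → tauCompact ζ K = tauCompact ζ' K := fun K hK => by
    simpa [inducedSetFun, hK] using h K (Or.inl hK)
  have hpos : ∀ f : C_c(X, ℝ), (∀ x, 0 ≤ f x) → ζ.toFun f = ζ'.toFun f := fun f hf =>
    le_antisymm (toFun_le_of_nonneg ζ ζ' hK f hf)
      (toFun_le_of_nonneg ζ' ζ (fun K hc => (hK K hc).symm) f hf)
  intro f
  rw [ζ.toFun_eq_pos_sub_neg, ζ'.toFun_eq_pos_sub_neg, hpos, hpos] <;> intro x <;>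
    rw [compFun_apply _ (by simp)] <;> exact le_max_right _ _

end
end

section
/- Let X be a locally compact Hausdorff space and let τ be a topological measure on X. Then there exists a quasi-integral ζ on X whose induced set function equals τ, i.e. τ(K) = inf{ζ(f) : f ∈ C_c(X), f ≥ 1_K} for every compact K ⊆ X and τ(O) = sup{ζ(f) : f ∈ C_c(X), f ≤ 1_O} for every open O ⊆ X with compact closure. -/
/-!
The quasi-integral is given by the layer-cake formula
`ζ(f) = ∫₀^∞ τ {f > t} dt - ∫₀^∞ τ {-f > t} dt`. Monotonicity is immediate, and the Lipschitz
estimate follows by cutting the integral at height `‖f - g‖`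
(`TopMeasure.upper_le_add`).

The point is quasi-linearity. Although `τ` need not be subadditive on `X`, its image under a single
function `f` is an honest measure: there is a finite Borel measure `μ_f` on `(0, ∞)` with
`μ_f(U) = τ(f⁻¹ U)` for all open `U ⊆ (0, ∞)` (`TopMeasure.posDistr_eq`). It is the Stieltjes
measure of `t ↦ -τ {f > t}`; the regularity of `τ` provides right-continuity and a lower
bound for the left limits, so that `μ_f` is at most `τ ∘ f⁻¹` on compact intervals. By the
Besicovitch covering theorem an open set is, up to a `μ_f`-null set, a countable disjoint union of compact intervals, so
finite additivity of `τ` gives `μ_f(U) ≤ τ(f⁻¹ U)`. Equality follows by passing to complements of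
compact sets, as both sides have the same total mass on `(0, ∞)`. Treating `-f` in the same way and
using the layer-cake formula for measures,
`ζ(φ ∘ f) = ∫ φ(s) dμ_f(s) + ∫ φ(-s) dμ_{-f}(s)` (`TopMeasure.quasiInt_comp`), which is linear
in `φ`.

Finally, `f ≥ 1_K` forces `ζ(f) ≥ τ(K)` and `f ≤ 1_O` forces `ζ(f) ≤ τ(O)`, and Urysohn functions
together with the regularity of `τ` show that these bounds are optimal.
-/

open Set Topology
open scoped CompactlySupported

noncomputable section

variable {X : Type*} [TopologicalSpace X]

namespace TopMeasure

open MeasureTheory Filter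

/-! ### Preimages under compactly supported functions -/

lemma isCompact_preimage (f : C_c(X, ℝ)) {C : Set ℝ} (hC : IsClosed C) (h0 : (0 : ℝ) ∉ C) :
    IsCompact (f ⁻¹' C) := by
  refine f.hasCompactSupport.isCompact.of_isClosed_subset (hC.preimage f.continuous) ?_
  intro x hx
  refine subset_tsupport f ?_
  rw [Function.mem_support]
  intro h
  exact h0 (h ▸ hx)

lemma isCompact_closure_preimage (f : C_c(X, ℝ)) {U : Set ℝ} (h0 : (0 : ℝ) ∉ U) :
    IsCompact (closure (f ⁻¹' U)) := by
  refine f.hasCompactSupport.isCompact.of_isClosed_subset isClosed_closure ?_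
  refine closure_mono fun x hx => ?_
  rw [Function.mem_support]
  intro h
  exact h0 (h ▸ hx)

lemma admissible_preimage_closed (f : C_c(X, ℝ)) {C : Set ℝ} (hC : IsClosed C)
    (h0 : (0 : ℝ) ∉ C) : f ⁻¹' C ∈ Admissible X :=
  Or.inl (isCompact_preimage f hC h0)

lemma admissible_preimage_open (f : C_c(X, ℝ)) {U : Set ℝ} (hU : IsOpen U)
    (h0 : (0 : ℝ) ∉ U) : f ⁻¹' U ∈ Admissible X :=
  Or.inr ⟨hU.preimage f.continuous, isCompact_closure_preimage f h0⟩

lemma exists_bound (f : C_c(X, ℝ)) : ∃ M : ℝ, 0 < M ∧ ∀ x, |f x| ≤ M := by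
  obtain ⟨C, hC⟩ := f.hasCompactSupport.exists_bound_of_continuous f.continuous
  exact ⟨max C 1, by positivity, fun x => (hC x).trans (le_max_left _ _)⟩

/-! ### Elementary properties of topological measures -/

lemma empty (τ : TopMeasure X) : τ.toFun ∅ = 0 := by
  have h : (∅ : Set X) ∈ Admissible X := Or.inl isCompact_empty
  have := τ.additive' ∅ ∅ h h (by simpa using h) (by simp)
  simp at this
  exact this

lemma le_of_compact_le (τ : TopMeasure X) {O : Set X} (hO : IsOpen O)
    (hO' : IsCompact (closure O)) {b : ℝ} (h : ∀ K, IsCompact K → K ⊆ O → τ.toFun K ≤ b) :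
    τ.toFun O ≤ b := by
  rw [τ.inner_reg' O hO hO']
  refine csSup_le ⟨_, ∅, ⟨isCompact_empty, empty_subset _⟩, rfl⟩ ?_
  rintro _ ⟨K, ⟨hK, hKO⟩, rfl⟩
  exact h K hK hKO

lemma exists_open_lt [LocallyCompactSpace X] [T2Space X] (τ : TopMeasure X) {K : Set X}
    (hK : IsCompact K) {ε : ℝ} (hε : 0 < ε) :
    ∃ O, IsOpen O ∧ IsCompact (closure O) ∧ K ⊆ O ∧ τ.toFun O < τ.toFun K + ε := by
  have hne : (τ.toFun '' {O : Set X | IsOpen O ∧ IsCompact (closure O) ∧ K ⊆ O}).Nonempty := by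
    obtain ⟨V, hV, hKV, -, hV'⟩ := exists_open_between_and_isCompact_closure hK isOpen_univ
      (subset_univ K)
    exact ⟨_, V, ⟨hV, hV', hKV⟩, rfl⟩
  have hlt : sInf (τ.toFun '' {O : Set X | IsOpen O ∧ IsCompact (closure O) ∧ K ⊆ O})
      < τ.toFun K + ε := by
    rw [← τ.outer_reg' K hK]; linarith
  obtain ⟨_, ⟨O, ⟨h1, h2, h3⟩, rfl⟩, h⟩ := exists_lt_of_csInf_lt hne hlt
  exact ⟨O, h1, h2, h3, h⟩

/-- Additivity on finite disjoint families of compact sets. -/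
lemma biUnion_finset (τ : TopMeasure X) {ι : Type*} (T : Finset ι) (A : ι → Set X)
    (hA : ∀ i ∈ T, IsCompact (A i)) (hd : (T : Set ι).PairwiseDisjoint A) :
    τ.toFun (⋃ i ∈ T, A i) = ∑ i ∈ T, τ.toFun (A i) := by
  classical
  induction T using Finset.induction_on with
  | empty => simp [τ.empty]
  | insert a T ha ih =>
    rw [Finset.sum_insert ha, Finset.set_biUnion_insert]
    have hT : IsCompact (⋃ i ∈ T, A i) :=
      T.isCompact_biUnion fun i hi => hA i (Finset.mem_insert_of_mem hi)
    have ha' : IsCompact (A a) := hA a (Finset.mem_insert_self _ _)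
    rw [τ.additive' _ _ (Or.inl ha') (Or.inl hT) (Or.inl (ha'.union hT)), ih]
    · exact fun i hi => hA i (Finset.mem_insert_of_mem hi)
    · exact hd.subset (by simp)
    · rw [Set.disjoint_iUnion₂_right]
      intro i hi
      refine hd (by simp) (by simp [hi]) ?_
      rintro rfl
      exact ha hi

/-! ### The distribution of a function on the positive half-line -/

/-- The distribution function `t ↦ -τ {f > max t 0}`. It vanishes for large `t` and is constant on
`(-∞, 0]`, so that the associated measure lives on `(0, ∞)`. -/
def distr (τ : TopMeasure X) (f : C_c(X, ℝ)) (t : ℝ) : ℝ :=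
  -τ.toFun (f ⁻¹' Ioi (max t 0))

lemma mono_Ioi (τ : TopMeasure X) (f : C_c(X, ℝ)) {s t : ℝ} (hs : 0 ≤ s) (hst : s ≤ t) :
    τ.toFun (f ⁻¹' Ioi t) ≤ τ.toFun (f ⁻¹' Ioi s) :=
  τ.mono' _ _ (admissible_preimage_open f isOpen_Ioi (by simpa using hs.trans hst))
    (admissible_preimage_open f isOpen_Ioi (by simpa using hs))
    (preimage_mono (Ioi_subset_Ioi hst))

lemma distr_mono (τ : TopMeasure X) (f : C_c(X, ℝ)) : Monotone (distr τ f) := by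
  intro s t hst
  unfold distr
  exact neg_le_neg (τ.mono_Ioi f (le_max_right _ _) (max_le_max_right 0 hst))

/-- Inner regularity: a compact subset of `{f > s}` is contained in `{f > u}` for some `u > s`. -/
lemma exists_gt_of_lt (τ : TopMeasure X) (f : C_c(X, ℝ)) {s b : ℝ} (hs : 0 ≤ s)
    (hb : b < τ.toFun (f ⁻¹' Ioi s)) : ∃ u, s < u ∧ b < τ.toFun (f ⁻¹' Ioi u) := by
  by_contra! hcon
  refine absurd hb (not_lt.2 ?_)
  refine τ.le_of_compact_le (isOpen_Ioi.preimage f.continuous)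
    (isCompact_closure_preimage f (by simpa using hs)) fun K hK hKs => ?_
  obtain ⟨u, hu, hKu⟩ : ∃ u, s < u ∧ K ⊆ f ⁻¹' Ioi u := by
    rcases K.eq_empty_or_nonempty with rfl | hne
    · exact ⟨s + 1, by linarith, empty_subset _⟩
    · obtain ⟨x, hx, hmin⟩ := hK.exists_isMinOn hne f.continuous.continuousOn
      have hsx : s < f x := hKs hx
      refine ⟨(s + f x) / 2, by linarith, fun y hy => ?_⟩
      have : f x ≤ f y := hmin hy
      simp only [mem_preimage, mem_Ioi]
      linarith
  refine le_trans (τ.mono' _ _ (Or.inl hK) (admissible_preimage_open f isOpen_Ioi ?_) hKu)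
    (hcon u hu)
  simpa using (hs.trans_lt hu).le

lemma distr_rightCts (τ : TopMeasure X) (f : C_c(X, ℝ)) (t : ℝ) :
    ContinuousWithinAt (distr τ f) (Ici t) t := by
  refine tendsto_order.2 ⟨fun a ha => ?_, fun b hb => ?_⟩
  · filter_upwards [self_mem_nhdsWithin] with s hs
    exact ha.trans_le (τ.distr_mono f hs)
  · have hb' : -b < τ.toFun (f ⁻¹' Ioi (max t 0)) := by
      unfold distr at hb; linarith
    obtain ⟨u, hu, hbu⟩ := τ.exists_gt_of_lt f (le_max_right t 0) hb'
    have htu : t < u := (le_max_left t 0).trans_lt hu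
    have h0u : 0 < u := (le_max_right t 0).trans_lt hu
    filter_upwards [mem_nhdsWithin_of_mem_nhds (Iio_mem_nhds htu)] with s hs
    refine (τ.distr_mono f (le_of_lt hs)).trans_lt ?_
    unfold distr
    rw [max_eq_left h0u.le]
    linarith

/-- The Stieltjes function attached to the distribution function of `f`. -/
def stieltjes (τ : TopMeasure X) (f : C_c(X, ℝ)) : StieltjesFunction ℝ where
  toFun := distr τ f
  mono' := τ.distr_mono f
  right_continuous' := τ.distr_rightCts f

/-- The Borel measure on `ℝ`, concentrated on `(0, ∞)`, which represents `τ` on the preimages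
under `f` of open subsets of `(0, ∞)`. -/
def posDistr (τ : TopMeasure X) (f : C_c(X, ℝ)) : Measure ℝ := (τ.stieltjes f).measure

lemma distr_of_nonneg (τ : TopMeasure X) (f : C_c(X, ℝ)) {t : ℝ} (ht : 0 ≤ t) :
    τ.stieltjes f t = -τ.toFun (f ⁻¹' Ioi t) := by
  change distr τ f t = _
  rw [distr, max_eq_left ht]

lemma tendsto_atBot (τ : TopMeasure X) (f : C_c(X, ℝ)) :
    Tendsto (τ.stieltjes f) atBot (𝓝 (-τ.toFun (f ⁻¹' Ioi 0))) := by
  refine tendsto_const_nhds.congr' ?_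
  filter_upwards [eventually_le_atBot 0] with t ht
  change _ = distr τ f t
  rw [distr, max_eq_right ht]

lemma tendsto_atTop (τ : TopMeasure X) (f : C_c(X, ℝ)) :
    Tendsto (τ.stieltjes f) atTop (𝓝 0) := by
  refine tendsto_const_nhds.congr' ?_
  obtain ⟨M, hM, hf⟩ := exists_bound f
  filter_upwards [eventually_ge_atTop M] with t ht
  rw [τ.distr_of_nonneg f (hM.le.trans ht)]
  have : f ⁻¹' Ioi t = ∅ := by
    ext x
    simpa using (le_abs_self _).trans ((hf x).trans ht)
  rw [this, τ.empty, neg_zero]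

instance isFiniteMeasure_posDistr (τ : TopMeasure X) (f : C_c(X, ℝ)) :
    IsFiniteMeasure (τ.posDistr f) := by
  constructor
  rw [posDistr, StieltjesFunction.measure_univ _ (τ.tendsto_atBot f) (τ.tendsto_atTop f)]
  exact ENNReal.ofReal_lt_top

lemma posDistr_Iic (τ : TopMeasure X) (f : C_c(X, ℝ)) : τ.posDistr f (Iic 0) = 0 := by
  rw [posDistr, StieltjesFunction.measure_Iic _ (τ.tendsto_atBot f), τ.distr_of_nonneg f le_rfl]
  simp

lemma posDistr_Ioi (τ : TopMeasure X) (f : C_c(X, ℝ)) :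
    τ.posDistr f (Ioi 0) = ENNReal.ofReal (τ.toFun (f ⁻¹' Ioi 0)) := by
  rw [posDistr, StieltjesFunction.measure_Ioi _ (τ.tendsto_atTop f), τ.distr_of_nonneg f le_rfl]
  simp

section

variable [T2Space X] [LocallyCompactSpace X]

/-- Outer regularity: a neighbourhood of the compact set `{f ≥ a}` contains `{f > t}` for
some `t < a`. -/
lemma exists_lt_Ioi (τ : TopMeasure X) (f : C_c(X, ℝ)) {a ε : ℝ} (ha : 0 < a) (hε : 0 < ε) :
    ∃ t, 0 ≤ t ∧ t < a ∧ τ.toFun (f ⁻¹' Ioi t) < τ.toFun (f ⁻¹' Ici a) + ε := by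
  obtain ⟨O, hO, hO', haO, hlt⟩ := τ.exists_open_lt
    (isCompact_preimage f isClosed_Ici (by simpa using ha) : IsCompact (f ⁻¹' Ici a)) hε
  obtain ⟨t, ht0, hta, htO⟩ : ∃ t, 0 ≤ t ∧ t < a ∧ f ⁻¹' Ioi t ⊆ O := by
    have hc : IsCompact (tsupport f \ O) := f.hasCompactSupport.isCompact.diff hO
    have hsupp : ∀ x, 0 < f x → x ∈ tsupport f := fun x hx =>
      subset_tsupport f (Function.mem_support.2 hx.ne')
    rcases (tsupport f \ O).eq_empty_or_nonempty with he | hne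
    · refine ⟨0, le_rfl, ha, fun x hx => ?_⟩
      exact sdiff_eq_empty.1 he (hsupp x hx)
    · obtain ⟨y, hy, hmax⟩ := hc.exists_isMaxOn hne f.continuous.continuousOn
      refine ⟨max (f y) 0, le_max_right _ _, max_lt ?_ ha, fun x hx => ?_⟩
      · by_contra! h
        exact hy.2 (haO h)
      · by_contra hxO
        have hx' : max (f y) 0 < f x := hx
        have : f x ≤ f y := hmax ⟨hsupp x ((le_max_right _ _).trans_lt hx'), hxO⟩
        exact absurd ((le_max_left _ _).trans_lt hx') (not_lt.2 this)
  refine ⟨t, ht0, hta, lt_of_le_of_lt ?_ hlt⟩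
  exact τ.mono' _ _ (admissible_preimage_open f isOpen_Ioi (by simpa using ht0))
    (Or.inr ⟨hO, hO'⟩) htO

lemma posDistr_Icc_le (τ : TopMeasure X) (f : C_c(X, ℝ)) {a b : ℝ} (ha : 0 < a) (hab : a ≤ b) :
    τ.posDistr f (Icc a b) ≤ ENNReal.ofReal (τ.toFun (f ⁻¹' Icc a b)) := by
  rw [posDistr, StieltjesFunction.measure_Icc]
  refine ENNReal.ofReal_le_ofReal ?_
  rw [τ.distr_of_nonneg f (ha.le.trans hab)]
  have hsplit : τ.toFun (f ⁻¹' Ici a) = τ.toFun (f ⁻¹' Icc a b) + τ.toFun (f ⁻¹' Ioi b) := by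
    have hu : f ⁻¹' Icc a b ∪ f ⁻¹' Ioi b = f ⁻¹' Ici a := by
      rw [← preimage_union, Icc_union_Ioi_eq_Ici hab]
    rw [← hu]
    refine τ.additive' _ _ (admissible_preimage_closed f isClosed_Icc (by simp [ha]))
      (admissible_preimage_open f isOpen_Ioi (by simpa using ha.le.trans hab)) ?_ ?_
    · rw [hu]
      exact admissible_preimage_closed f isClosed_Ici (by simpa using ha)
    · refine Disjoint.preimage _ ?_
      rw [Set.disjoint_left]
      rintro x ⟨_, h⟩ h'
      exact absurd h (not_le.2 h')
  have hleft : -τ.toFun (f ⁻¹' Ici a) ≤ Function.leftLim (τ.stieltjes f) a := by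
    refine le_of_forall_pos_le_add fun ε hε => ?_
    obtain ⟨t, ht0, hta, h⟩ := τ.exists_lt_Ioi f ha hε
    have := (τ.stieltjes f).mono.le_leftLim hta
    rw [τ.distr_of_nonneg f ht0] at this
    linarith
  linarith

/-- An open subset of `(0, ∞)` is exhausted, up to a null set, by countably many disjoint compact
intervals, so superadditivity of `τ` gives one inequality. -/
lemma posDistr_le (τ : TopMeasure X) (f : C_c(X, ℝ)) {U : Set ℝ} (hU : IsOpen U)
    (hU0 : U ⊆ Ioi 0) : τ.posDistr f U ≤ ENNReal.ofReal (τ.toFun (f ⁻¹' U)) := by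
  have h0U : (0 : ℝ) ∉ U := fun h => lt_irrefl (0 : ℝ) (hU0 h)
  obtain ⟨t, r, htc, hts, htr, hnull, hdisj⟩ := Besicovitch.exists_disjoint_closedBall_covering_ae
    (τ.posDistr f) (fun x => {r | Metric.closedBall x r ⊆ U}) U (by
      intro x hx δ hδ
      obtain ⟨ρ, hρ, hρU⟩ := Metric.nhds_basis_closedBall.mem_iff.1 (hU.mem_nhds hx)
      have hm : 0 < min ρ (δ / 2) := by positivity
      refine ⟨min ρ (δ / 2), ?_, hm, ?_⟩
      · exact (Metric.closedBall_subset_closedBall (min_le_left _ _)).trans hρU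
      · exact (min_le_right _ _).trans_lt (by linarith)) (fun _ => 1) (fun _ _ => one_pos)
  have hball : ∀ x ∈ t, Metric.closedBall x (r x) ⊆ U := fun x hx => (htr x hx).1
  have hle : ∀ x ∈ t, τ.posDistr f (Metric.closedBall x (r x)) ≤
      ENNReal.ofReal (τ.toFun (f ⁻¹' Metric.closedBall x (r x))) := by
    intro x hx
    have hr : 0 < r x := (htr x hx).2.1
    have hpos : x - r x ∈ Metric.closedBall x (r x) := by
      rw [Real.closedBall_eq_Icc]; constructor <;> linarith
    have hpos' : 0 < x - r x := hU0 (hball x hx hpos)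
    rw [Real.closedBall_eq_Icc]
    exact τ.posDistr_Icc_le f hpos' (by linarith)
  calc τ.posDistr f U
      ≤ τ.posDistr f (U \ ⋃ x ∈ t, Metric.closedBall x (r x))
        + τ.posDistr f (⋃ x ∈ t, Metric.closedBall x (r x)) := by
        refine (measure_mono ?_).trans (measure_union_le _ _)
        rw [sdiff_union_self]
        exact subset_union_left
    _ = τ.posDistr f (⋃ x ∈ t, Metric.closedBall x (r x)) := by rw [hnull, zero_add]
    _ ≤ ∑' x : t, τ.posDistr f (Metric.closedBall (x : ℝ) (r x)) :=
        measure_biUnion_le _ htc _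
    _ ≤ ENNReal.ofReal (τ.toFun (f ⁻¹' U)) := by
        rw [ENNReal.tsum_eq_iSup_sum]
        refine iSup_le fun T => ?_
        have hcomp : ∀ x : t, IsCompact (f ⁻¹' Metric.closedBall (x : ℝ) (r x)) := fun x =>
          isCompact_preimage f Metric.isClosed_closedBall fun h => h0U (hball x x.2 h)
        calc ∑ x ∈ T, τ.posDistr f (Metric.closedBall (x : ℝ) (r x))
            ≤ ∑ x ∈ T, ENNReal.ofReal (τ.toFun (f ⁻¹' Metric.closedBall (x : ℝ) (r x))) :=
              Finset.sum_le_sum fun x _ => hle x x.2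
          _ = ENNReal.ofReal (τ.toFun (⋃ x ∈ T, f ⁻¹' Metric.closedBall (x : ℝ) (r x))) := by
              rw [← ENNReal.ofReal_sum_of_nonneg fun x _ => τ.nonneg' _, τ.biUnion_finset]
              · exact fun x _ => hcomp x
              · intro x _ y _ hxy
                exact (hdisj x.2 y.2 fun h => hxy (Subtype.ext h)).preimage f
          _ ≤ ENNReal.ofReal (τ.toFun (f ⁻¹' U)) := by
              refine ENNReal.ofReal_le_ofReal (τ.mono' _ _
                (Or.inl (T.isCompact_biUnion fun x _ => hcomp x))
                (admissible_preimage_open f hU h0U) ?_)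
              exact iUnion₂_subset fun x _ => preimage_mono (hball x x.2)

/-- The measure `posDistr τ f` represents `τ` on preimages of open subsets of `(0, ∞)`. -/
lemma posDistr_eq (τ : TopMeasure X) (f : C_c(X, ℝ)) {U : Set ℝ} (hU : IsOpen U)
    (hU0 : U ⊆ Ioi 0) : τ.posDistr f U = ENNReal.ofReal (τ.toFun (f ⁻¹' U)) := by
  have h0U : (0 : ℝ) ∉ U := fun h => lt_irrefl (0 : ℝ) (hU0 h)
  refine le_antisymm (τ.posDistr_le f hU hU0) ?_
  refine ENNReal.ofReal_le_of_le_toReal ?_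
  refine τ.le_of_compact_le (hU.preimage f.continuous) (isCompact_closure_preimage f h0U)
    fun K hK hKU => ?_
  have hC : IsCompact (f '' K) := hK.image f.continuous
  have hCU : f '' K ⊆ U := image_subset_iff.2 hKU
  have h0C : (0 : ℝ) ∉ f '' K := fun h => h0U (hCU h)
  have hCadm := admissible_preimage_closed f hC.isClosed h0C
  have hdiff : IsOpen (Ioi (0 : ℝ) \ f '' K) := isOpen_Ioi.sdiff hC.isClosed
  -- Passing to complements in `(0, ∞)` turns the inequality for open sets into the opposite
  -- inequality for the compact set `f '' K`, because the total masses agree.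
  have hsplit : τ.toFun (f ⁻¹' Ioi 0) =
      τ.toFun (f ⁻¹' (f '' K)) + τ.toFun (f ⁻¹' (Ioi 0 \ f '' K)) := by
    have hu : f ⁻¹' (f '' K) ∪ f ⁻¹' (Ioi 0 \ f '' K) = f ⁻¹' Ioi 0 := by
      rw [← preimage_union, union_sdiff_cancel (hCU.trans hU0)]
    rw [← hu]
    refine τ.additive' _ _ hCadm (admissible_preimage_open f hdiff (by simp)) ?_
      (disjoint_sdiff_right.preimage f)
    rw [hu]
    exact admissible_preimage_open f isOpen_Ioi (by simp)
  have hmeas : τ.posDistr f (Ioi 0) =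
      τ.posDistr f (f '' K) + τ.posDistr f (Ioi 0 \ f '' K) := by
    rw [← measure_union disjoint_sdiff_right hdiff.measurableSet,
      union_sdiff_cancel (hCU.trans hU0)]
  have hKC : ENNReal.ofReal (τ.toFun (f ⁻¹' (f '' K))) ≤ τ.posDistr f (f '' K) := by
    refine ENNReal.le_of_add_le_add_right
      (a := ENNReal.ofReal (τ.toFun (f ⁻¹' (Ioi 0 \ f '' K)))) ENNReal.ofReal_ne_top ?_
    rw [← ENNReal.ofReal_add (τ.nonneg' _) (τ.nonneg' _), ← hsplit, ← τ.posDistr_Ioi f, hmeas]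
    gcongr
    exact τ.posDistr_le f hdiff sdiff_subset
  have hKU2 := hKC.trans (measure_mono hCU)
  rw [ENNReal.ofReal_le_iff_le_toReal (measure_ne_top _ _)] at hKU2
  exact (τ.mono' _ _ (Or.inl hK) hCadm (subset_preimage_image f K)).trans hKU2

end

/-! ### The layer-cake functional -/

/-- The functional `f ↦ ∫₀^∞ τ {f > t} dt`, which depends only on the positive part of `f`. -/
def upper (τ : TopMeasure X) (f : C_c(X, ℝ)) : ENNReal :=
  ∫⁻ t in Ioi (0 : ℝ), ENNReal.ofReal (τ.toFun (f ⁻¹' Ioi t))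

lemma upper_mono (τ : TopMeasure X) {f g : C_c(X, ℝ)} (h : ∀ x, f x ≤ g x) :
    τ.upper f ≤ τ.upper g := by
  refine setLIntegral_mono' measurableSet_Ioi fun t ht => ENNReal.ofReal_le_ofReal ?_
  have ht0 : (0 : ℝ) ∉ Ioi t := by simpa using (le_of_lt ht : (0 : ℝ) ≤ t)
  exact τ.mono' _ _ (admissible_preimage_open f isOpen_Ioi ht0)
    (admissible_preimage_open g isOpen_Ioi ht0) fun x hx => lt_of_lt_of_le hx (h x)

/-- If `f ≤ g + d` and `f` is supported in `K`, then cutting the layer-cake integral of `f` at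
height `d` bounds it by `d τ(K)` plus that of `g`. -/
lemma upper_le_add (τ : TopMeasure X) {f g : C_c(X, ℝ)} {K : Set X} (hK : IsCompact K)
    (hf : tsupport f ⊆ K) {d : ℝ} (hd : 0 ≤ d) (h : ∀ x, f x ≤ g x + d) :
    τ.upper f ≤ ENNReal.ofReal (d * τ.toFun K) + τ.upper g := by
  set G : ℝ → ENNReal := (Ioi (0 : ℝ)).indicator
    (fun t => ENNReal.ofReal (τ.toFun (g ⁻¹' Ioi t))) with hG
  have hpt : ∀ t, (Ioi (0 : ℝ)).indicator (fun t => ENNReal.ofReal (τ.toFun (f ⁻¹' Ioi t))) t ≤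
      (Ioc 0 d).indicator (fun _ => ENNReal.ofReal (τ.toFun K)) t + G (t - d) := by
    intro t
    by_cases ht : 0 < t
    · have ht0 : (0 : ℝ) ∉ Ioi t := by simpa using ht.le
      rw [indicator_of_mem (show t ∈ Ioi (0 : ℝ) from ht)]
      rcases le_or_gt t d with htd | htd
      · rw [indicator_of_mem (show t ∈ Ioc 0 d from ⟨ht, htd⟩)]
        refine le_add_right (ENNReal.ofReal_le_ofReal ?_)
        refine τ.mono' _ _ (admissible_preimage_open f isOpen_Ioi ht0) (Or.inl hK) ?_
        intro x hx
        exact hf (subset_tsupport f (Function.mem_support.2 (ht.trans hx).ne'))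
      · have htd' : 0 < t - d := sub_pos.2 htd
        rw [hG, indicator_of_mem (show t - d ∈ Ioi (0 : ℝ) from htd')]
        refine le_add_left (ENNReal.ofReal_le_ofReal ?_)
        refine τ.mono' _ _ (admissible_preimage_open f isOpen_Ioi ht0)
          (admissible_preimage_open g isOpen_Ioi (by simpa using htd.le)) ?_
        intro x hx
        have hx' : t < f x := hx
        have := h x
        simp only [mem_preimage, mem_Ioi]
        linarith
    · rw [indicator_of_notMem (show t ∉ Ioi (0 : ℝ) from ht)]
      exact zero_le
  unfold upper
  rw [← lintegral_indicator measurableSet_Ioi, ← lintegral_indicator measurableSet_Ioi]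
  calc _ ≤ ∫⁻ t, ((Ioc 0 d).indicator (fun _ => ENNReal.ofReal (τ.toFun K)) t + G (t - d)) :=
        lintegral_mono hpt
    _ = (∫⁻ t, (Ioc 0 d).indicator (fun _ => ENNReal.ofReal (τ.toFun K)) t)
        + ∫⁻ t, G (t - d) :=
        lintegral_add_left (measurable_const.indicator measurableSet_Ioc) _
    _ = ENNReal.ofReal (d * τ.toFun K) + ∫⁻ t, G t := by
        rw [lintegral_sub_right_eq_self G d, lintegral_indicator measurableSet_Ioc,
          setLIntegral_const, Real.volume_Ioc, sub_zero, ENNReal.ofReal_mul hd, mul_comm]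

lemma upper_zero (τ : TopMeasure X) : τ.upper 0 = 0 := by
  unfold upper
  rw [setLIntegral_congr_fun (g := fun _ => 0) measurableSet_Ioi, lintegral_zero]
  intro t ht
  have : (⇑(0 : C_c(X, ℝ))) ⁻¹' Ioi t = ∅ := by
    ext x
    simpa using (le_of_lt ht : (0 : ℝ) ≤ t)
  simp only [this, τ.empty, ENNReal.ofReal_zero]

lemma upper_le_of_le (τ : TopMeasure X) {f : C_c(X, ℝ)} {K : Set X} (hK : IsCompact K)
    (hf : tsupport f ⊆ K) {d : ℝ} (hd : 0 ≤ d) (h : ∀ x, f x ≤ d) :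
    τ.upper f ≤ ENNReal.ofReal (d * τ.toFun K) := by
  simpa [τ.upper_zero] using τ.upper_le_add (g := 0) hK hf hd (by simpa using h)

lemma upper_ne_top (τ : TopMeasure X) (f : C_c(X, ℝ)) : τ.upper f ≠ ⊤ := by
  obtain ⟨M, hM, hf⟩ := exists_bound f
  exact ne_top_of_le_ne_top ENNReal.ofReal_ne_top (τ.upper_le_of_le
    f.hasCompactSupport.isCompact subset_rfl hM.le fun x => (le_abs_self _).trans (hf x))

/-- The functional attached to `τ`: the layer-cake integral of the positive part minus that of the
negative part. -/
def quasiInt (τ : TopMeasure X) (f : C_c(X, ℝ)) : ℝ :=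
  (τ.upper f).toReal - (τ.upper (-f)).toReal

lemma quasiInt_mono (τ : TopMeasure X) {f g : C_c(X, ℝ)} (h : ∀ x, f x ≤ g x) :
    τ.quasiInt f ≤ τ.quasiInt g := by
  have h1 := ENNReal.toReal_mono (τ.upper_ne_top g) (τ.upper_mono h)
  have h2 := ENNReal.toReal_mono (τ.upper_ne_top (-f)) (τ.upper_mono (f := -g) (g := -f)
    fun x => by simpa using h x)
  unfold quasiInt
  linarith

lemma toReal_upper_le_add (τ : TopMeasure X) {f g : C_c(X, ℝ)} {K : Set X} (hK : IsCompact K)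
    (hf : tsupport f ⊆ K) {d : ℝ} (hd : 0 ≤ d) (h : ∀ x, f x ≤ g x + d) :
    (τ.upper f).toReal ≤ d * τ.toFun K + (τ.upper g).toReal := by
  have h0 : 0 ≤ d * τ.toFun K := mul_nonneg hd (τ.nonneg' K)
  have := ENNReal.toReal_mono (by finiteness [τ.upper_ne_top g]) (τ.upper_le_add hK hf hd h)
  rwa [ENNReal.toReal_add ENNReal.ofReal_ne_top (τ.upper_ne_top g),
    ENNReal.toReal_ofReal h0] at this

lemma quasiInt_sub_le (τ : TopMeasure X) {f g : C_c(X, ℝ)} {K : Set X} (hK : IsCompact K)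
    (hf : tsupport f ⊆ K) (hg : tsupport g ⊆ K) {d : ℝ} (hd : 0 ≤ d)
    (h : ∀ x, |f x - g x| ≤ d) : τ.quasiInt f - τ.quasiInt g ≤ 2 * τ.toFun K * d := by
  have h1 := τ.toReal_upper_le_add (g := g) hK hf hd fun x => by
    have := (abs_le.1 (h x)).2
    linarith
  have hg' : tsupport ⇑(-g) ⊆ K := by
    rwa [CompactlySupportedContinuousMap.coe_neg, tsupport, Function.support_neg]
  have h2 := τ.toReal_upper_le_add (f := -g) (g := -f) hK hg' hd fun x => by
    have := (abs_le.1 (h x)).2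
    simp only [CompactlySupportedContinuousMap.coe_neg, Pi.neg_apply]
    linarith
  unfold quasiInt
  linarith

lemma quasiInt_lipschitz (τ : TopMeasure X) {f g : C_c(X, ℝ)} {K : Set X} (hK : IsCompact K)
    (hf : tsupport f ⊆ K) (hg : tsupport g ⊆ K) :
    |τ.quasiInt f - τ.quasiInt g| ≤ 2 * τ.toFun K * ⨆ x, |f x - g x| := by
  obtain ⟨M, hM, hM'⟩ := exists_bound (f - g)
  have hbdd : BddAbove (range fun x => |f x - g x|) := by
    refine ⟨M, ?_⟩
    rintro _ ⟨x, rfl⟩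
    simpa using hM' x
  have hd : 0 ≤ ⨆ x, |f x - g x| := Real.iSup_nonneg fun x => abs_nonneg _
  have h : ∀ x, |f x - g x| ≤ ⨆ x, |f x - g x| := fun x => le_ciSup hbdd x
  refine abs_le.2 ⟨?_, τ.quasiInt_sub_le hK hf hg hd h⟩
  have := τ.quasiInt_sub_le hK hg hf hd fun x => (abs_sub_comm _ _).trans_le (h x)
  linarith

/-! ### Quasi-linearity -/

/-- The two half-lines together: `τ ∘ f⁻¹` on open sets avoiding `0` is the sum of the distribution
of `f` on `(0, ∞)` and the reflected distribution of `-f`. -/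
lemma ofReal_preimage_eq (τ : TopMeasure X) [T2Space X] [LocallyCompactSpace X]
    (f : C_c(X, ℝ)) {V : Set ℝ} (hV : IsOpen V) (h0 : (0 : ℝ) ∉ V) :
    ENNReal.ofReal (τ.toFun (f ⁻¹' V)) = τ.posDistr f V + τ.posDistr (-f) (-V) := by
  have hnull : ∀ (g : C_c(X, ℝ)) {W : Set ℝ}, τ.posDistr g W = τ.posDistr g (W ∩ Ioi 0) := by
    intro g W
    refine (measure_inter_conull ?_).symm
    refine measure_mono_null (fun x hx => ?_) (τ.posDistr_Iic g)
    exact not_lt.1 (show ¬ (0 : ℝ) < x from hx)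
  have hsplit : V = (V ∩ Ioi 0) ∪ (V ∩ Iio 0) := by
    ext x
    rcases lt_trichotomy x 0 with h | rfl | h
    · have h' := h.not_gt
      simp only [mem_union, mem_inter_iff, mem_Ioi, mem_Iio, h, h']
      tauto
    · simp [h0]
    · have h' := h.not_gt
      simp only [mem_union, mem_inter_iff, mem_Ioi, mem_Iio, h, h']
      tauto
  have hneg : f ⁻¹' (V ∩ Iio 0) = (-f : C_c(X, ℝ)) ⁻¹' (-V ∩ Ioi 0) := by
    ext x
    simp
  have hpos := hV.inter (isOpen_Ioi (a := (0 : ℝ)))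
  have hneg' := hV.inter (isOpen_Iio (a := (0 : ℝ)))
  have hadd : τ.toFun (f ⁻¹' V) = τ.toFun (f ⁻¹' (V ∩ Ioi 0)) + τ.toFun (f ⁻¹' (V ∩ Iio 0)) := by
    conv_lhs => rw [hsplit, preimage_union]
    refine τ.additive' _ _ (admissible_preimage_open f hpos (by simp))
      (admissible_preimage_open f hneg' (by simp)) ?_ (Disjoint.preimage _ ?_)
    · rw [← preimage_union, ← hsplit]
      exact admissible_preimage_open f hV h0
    · rw [Set.disjoint_left]
      rintro x ⟨_, h⟩ ⟨_, h'⟩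
      exact lt_asymm (show (0 : ℝ) < x from h) h'
  rw [hadd, ENNReal.ofReal_add (τ.nonneg' _) (τ.nonneg' _), hneg, hnull f, hnull (-f),
    τ.posDistr_eq f hpos inter_subset_right,
    τ.posDistr_eq (-f) (hV.neg.inter isOpen_Ioi) inter_subset_right]

lemma lintegral_ofReal_eq (μ : Measure ℝ) {φ : ℝ → ℝ} (hφ : Continuous φ) :
    ∫⁻ s, ENNReal.ofReal (φ s) ∂μ = ∫⁻ t in Ioi (0 : ℝ), μ {s | t < φ s} := by
  have h := lintegral_eq_lintegral_meas_lt μ (f := fun s => max (φ s) 0)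
    (Eventually.of_forall fun s => le_max_right _ _)
    (hφ.max continuous_const).measurable.aemeasurable
  calc ∫⁻ s, ENNReal.ofReal (φ s) ∂μ = ∫⁻ s, ENNReal.ofReal (max (φ s) 0) ∂μ := by simp
    _ = _ := h
    _ = _ := by
      refine setLIntegral_congr_fun measurableSet_Ioi fun t ht => ?_
      congr 1
      ext s
      have ht' : ¬ t < 0 := not_lt.2 (le_of_lt ht)
      simp [ht']

lemma upper_comp (τ : TopMeasure X) [T2Space X] [LocallyCompactSpace X] (f g : C_c(X, ℝ))
    {φ : ℝ → ℝ} (hφ : Continuous φ) (hφ0 : φ 0 = 0) (hg : ∀ x, g x = φ (f x)) :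
    τ.upper g = (∫⁻ s, ENNReal.ofReal (φ s) ∂(τ.posDistr f)) +
      ∫⁻ s, ENNReal.ofReal (φ (-s)) ∂(τ.posDistr (-f)) := by
  have hφ' : Continuous fun s => φ (-s) := hφ.comp continuous_neg
  rw [lintegral_ofReal_eq _ hφ, lintegral_ofReal_eq _ hφ', ← lintegral_add_left]
  · refine setLIntegral_congr_fun measurableSet_Ioi fun t ht => ?_
    have hpre : g ⁻¹' Ioi t = f ⁻¹' {s | t < φ s} := by
      ext x
      simp [hg]
    have h0 : (0 : ℝ) ∉ {s | t < φ s} := by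
      simpa [hφ0] using (le_of_lt ht : (0 : ℝ) ≤ t)
    simp only [hpre]
    rw [τ.ofReal_preimage_eq f (isOpen_lt continuous_const hφ) h0]
    rfl
  · refine Antitone.measurable fun s t hst => measure_mono fun x hx => ?_
    exact lt_of_le_of_lt hst hx

/-- The distribution of `f` has bounded support, so continuous functions are integrable. -/
lemma integrable_posDistr (τ : TopMeasure X) [T2Space X] [LocallyCompactSpace X] (f : C_c(X, ℝ))
    {φ : ℝ → ℝ} (hφ : Continuous φ) : Integrable φ (τ.posDistr f) := by
  obtain ⟨M, hM, hf⟩ := exists_bound f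
  obtain ⟨B, hB⟩ := (isCompact_Icc (a := (0 : ℝ)) (b := M)).exists_bound_of_continuousOn
    hφ.continuousOn
  refine Integrable.of_bound hφ.aestronglyMeasurable B ?_
  have h1 : τ.posDistr f (Ioi M) = 0 := by
    rw [τ.posDistr_eq f isOpen_Ioi (Ioi_subset_Ioi hM.le)]
    have : f ⁻¹' Ioi M = ∅ := by
      ext x
      simpa using (le_abs_self _).trans (hf x)
    rw [this, τ.empty, ENNReal.ofReal_zero]
  filter_upwards [measure_eq_zero_iff_ae_notMem.1 h1,
    measure_eq_zero_iff_ae_notMem.1 (τ.posDistr_Iic f)] with s hs hs'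
  refine hB s ⟨?_, by simpa using hs⟩
  simp only [mem_Iic, not_le] at hs'
  exact le_of_lt (hs' : 0 < s)

/-- On functions of `f`, the functional is integration against the distribution of `f`, and hence
linear. -/
lemma quasiInt_comp (τ : TopMeasure X) [T2Space X] [LocallyCompactSpace X] (f g : C_c(X, ℝ))
    {φ : ℝ → ℝ} (hφ : Continuous φ) (hφ0 : φ 0 = 0) (hg : ∀ x, g x = φ (f x)) :
    τ.quasiInt g = (∫ s, φ s ∂(τ.posDistr f)) + ∫ s, φ (-s) ∂(τ.posDistr (-f)) := by
  have h1 := τ.integrable_posDistr f hφ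
  have h2 := τ.integrable_posDistr (-f) (hφ.comp continuous_neg)
  have hu := τ.upper_comp f g hφ hφ0 hg
  have hl := τ.upper_comp f (-g) (φ := fun s => -φ s) hφ.neg (by simp [hφ0])
    (by simpa using hg)
  have fin1 := h1.lintegral_lt_top.ne
  have fin2 := h2.lintegral_lt_top.ne
  have fin3 := h1.neg.lintegral_lt_top.ne
  have fin4 := h2.neg.lintegral_lt_top.ne
  simp only [Function.comp_apply, Pi.neg_apply] at fin1 fin2 fin3 fin4
  rw [quasiInt, hu, hl, ENNReal.toReal_add fin1 fin2, ENNReal.toReal_add fin3 fin4,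
    integral_eq_lintegral_pos_part_sub_lintegral_neg_part h1,
    integral_eq_lintegral_pos_part_sub_lintegral_neg_part (f := fun s => φ (-s)) h2]
  ring

/-- The quasi-integral attached to a topological measure. -/
def toQuasiIntegral (τ : TopMeasure X) [T2Space X] [LocallyCompactSpace X] : QuasiIntegral X where
  toFun := τ.quasiInt
  mono' _ _ h := τ.quasiInt_mono h
  lipschitz' K hK := ⟨2 * τ.toFun K, mul_nonneg zero_le_two (τ.nonneg' K),
    fun _ _ hf hg => τ.quasiInt_lipschitz hK hf hg⟩
  quasilin_add' f φ ψ hφ hψ hφ0 hψ0 gφ gψ gs h1 h2 h3 := by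
    rw [τ.quasiInt_comp f gφ hφ hφ0 h1, τ.quasiInt_comp f gψ hψ hψ0 h2,
      τ.quasiInt_comp f gs (φ := fun s => φ s + ψ s) (hφ.add hψ) (by simp [hφ0, hψ0]) h3,
      integral_add (τ.integrable_posDistr f hφ) (τ.integrable_posDistr f hψ),
      integral_add (f := fun s => φ (-s)) (g := fun s => ψ (-s))
        (τ.integrable_posDistr (-f) (hφ.comp continuous_neg))
        (τ.integrable_posDistr (-f) (hψ.comp continuous_neg))]
    ring
  quasilin_smul' f φ hφ hφ0 c gφ gc h1 h2 := by
    rw [τ.quasiInt_comp f gφ hφ hφ0 h1,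
      τ.quasiInt_comp f gc (φ := fun s => c * φ s) (continuous_const.mul hφ) (by simp [hφ0]) h2,
      integral_const_mul, integral_const_mul]
    ring

/-! ### The induced set function -/

lemma upper_neg_of_nonneg (τ : TopMeasure X) {f : C_c(X, ℝ)} (hf : ∀ x, 0 ≤ f x) :
    τ.upper (-f) = 0 := by
  have := τ.upper_mono (f := -f) (g := 0) fun x => by simpa using hf x
  rw [τ.upper_zero] at this
  exact le_antisymm this zero_le

/-- Since `{f > t} ⊇ K` for every `t < 1`. -/
lemma le_quasiInt (τ : TopMeasure X) {f : C_c(X, ℝ)} {K : Set X} (hK : IsCompact K)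
    (hf : ∀ x, K.indicator (fun _ => (1 : ℝ)) x ≤ f x) : τ.toFun K ≤ τ.quasiInt f := by
  have hf0 : ∀ x, 0 ≤ f x := fun x => (indicator_nonneg (fun _ _ => zero_le_one) x).trans (hf x)
  rw [quasiInt, τ.upper_neg_of_nonneg hf0, ENNReal.toReal_zero, sub_zero,
    ← ENNReal.ofReal_le_iff_le_toReal (τ.upper_ne_top f)]
  calc ENNReal.ofReal (τ.toFun K)
      = ∫⁻ _ in Ioo (0 : ℝ) 1, ENNReal.ofReal (τ.toFun K) := by simp
    _ ≤ ∫⁻ t in Ioo (0 : ℝ) 1, ENNReal.ofReal (τ.toFun (f ⁻¹' Ioi t)) := by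
        refine setLIntegral_mono' measurableSet_Ioo fun t ht => ENNReal.ofReal_le_ofReal ?_
        refine τ.mono' _ _ (Or.inl hK)
          (admissible_preimage_open f isOpen_Ioi (by simpa using ht.1.le)) fun x hx => ?_
        have := hf x
        rw [indicator_of_mem hx] at this
        exact ht.2.trans_le this
    _ ≤ τ.upper f := lintegral_mono_set Ioo_subset_Ioi_self

/-- Since `{f > t}` is contained in `O` for `0 ≤ t` and empty for `t ≥ 1`. -/
lemma quasiInt_le (τ : TopMeasure X) {f : C_c(X, ℝ)} {O : Set X} (hO : IsOpen O)
    (hO' : IsCompact (closure O)) (hf : ∀ x, f x ≤ O.indicator (fun _ => (1 : ℝ)) x) :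
    τ.quasiInt f ≤ τ.toFun O := by
  have hle : τ.upper f ≤ ENNReal.ofReal (τ.toFun O) := by
    calc τ.upper f
        ≤ ∫⁻ t in Ioi (0 : ℝ), (Ioo (0 : ℝ) 1).indicator
            (fun _ => ENNReal.ofReal (τ.toFun O)) t := by
          refine setLIntegral_mono' measurableSet_Ioi fun t ht => ?_
          rcases lt_or_ge t 1 with h1 | h1
          · rw [indicator_of_mem (show t ∈ Ioo (0 : ℝ) 1 from ⟨ht, h1⟩)]
            refine ENNReal.ofReal_le_ofReal (τ.mono' _ _ (admissible_preimage_open f isOpen_Ioi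
              (by simpa using (le_of_lt ht : (0 : ℝ) ≤ t))) (Or.inr ⟨hO, hO'⟩) fun x hx => ?_)
            by_contra hxO
            have := hf x
            rw [indicator_of_notMem hxO] at this
            exact lt_asymm (show (0 : ℝ) < t from ht) (lt_of_lt_of_le hx this)
          · have : f ⁻¹' Ioi t = ∅ := by
              ext x
              have h := (hf x).trans (indicator_le_self' (fun _ _ => zero_le_one) x)
              simpa using h.trans h1
            rw [this, τ.empty, ENNReal.ofReal_zero]
            exact zero_le
      _ ≤ ∫⁻ t, (Ioo (0 : ℝ) 1).indicator (fun _ => ENNReal.ofReal (τ.toFun O)) t :=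
          setLIntegral_le_lintegral _ _
      _ = ENNReal.ofReal (τ.toFun O) := by
          rw [lintegral_indicator measurableSet_Ioo]
          simp
  have := ENNReal.toReal_mono ENNReal.ofReal_ne_top hle
  rw [ENNReal.toReal_ofReal (τ.nonneg' O)] at this
  have h0 : 0 ≤ (τ.upper (-f)).toReal := ENNReal.toReal_nonneg
  unfold quasiInt
  linarith

/-- Urysohn's lemma in the form `1_K ≤ f ≤ 1_O`. -/
lemma exists_between [T2Space X] [LocallyCompactSpace X] {K O : Set X} (hK : IsCompact K)
    (hO : IsOpen O) (hKO : K ⊆ O) : ∃ f : C_c(X, ℝ),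
      (∀ x, K.indicator (fun _ => (1 : ℝ)) x ≤ f x) ∧
      (∀ x, f x ≤ O.indicator (fun _ => (1 : ℝ)) x) := by
  obtain ⟨f, h1, h0, hc, h01⟩ := exists_continuous_one_zero_of_isCompact hK hO.isClosed_compl
    (disjoint_compl_right_iff_subset.2 hKO)
  refine ⟨⟨f, hc⟩, fun x => ?_, fun x => ?_⟩
  · rw [CompactlySupportedContinuousMap.coe_mk]
    by_cases hx : x ∈ K
    · rw [indicator_of_mem hx, h1 hx, Pi.one_apply]
    · rw [indicator_of_notMem hx]
      exact (h01 x).1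
  · rw [CompactlySupportedContinuousMap.coe_mk]
    by_cases hx : x ∈ O
    · rw [indicator_of_mem hx]
      exact (h01 x).2
    · rw [indicator_of_notMem hx, h0 hx, Pi.zero_apply]

end TopMeasure

/-- every topological measure `τ` on `X` is the induced set
function of some quasi-integral: `τ(K) = inf {ζ(f) | f ≥ 1_K}` for compact `K`
and `τ(O) = sup {ζ(f) | f ≤ 1_O}` for open `O` with compact closure. -/
theorem topMeasure_is_induced {X : Type*} [TopologicalSpace X]
    [T2Space X] [LocallyCompactSpace X] (τ : TopMeasure X) :
    ∃ ζ : QuasiIntegral X,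
      (∀ K : Set X, IsCompact K → tauCompact ζ K = τ.toFun K) ∧
      (∀ O : Set X, IsOpen O → IsCompact (closure O) → tauOpen ζ O = τ.toFun O) := by
  refine ⟨τ.toQuasiIntegral, fun K hK => ?_, fun O hO hO' => ?_⟩
  · have hbdd : ∀ b ∈ τ.toQuasiIntegral.toFun ''
        {f : C_c(X, ℝ) | ∀ x, K.indicator (fun _ => (1 : ℝ)) x ≤ f x}, τ.toFun K ≤ b := by
      rintro _ ⟨f, hf, rfl⟩
      exact τ.le_quasiInt hK hf
    refine le_antisymm (le_of_forall_pos_le_add fun ε hε => ?_) ?_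
    · obtain ⟨O, hO, hO', hKO, hlt⟩ := τ.exists_open_lt hK hε
      obtain ⟨f, hKf, hfO⟩ := TopMeasure.exists_between hK hO hKO
      exact (csInf_le ⟨_, hbdd⟩ ⟨f, hKf, rfl⟩).trans ((τ.quasiInt_le hO hO' hfO).trans hlt.le)
    · obtain ⟨f, hKf, -⟩ := TopMeasure.exists_between hK isOpen_univ (subset_univ K)
      exact le_csInf ⟨_, f, hKf, rfl⟩ hbdd
  · have hbdd : ∀ b ∈ τ.toQuasiIntegral.toFun ''
        {f : C_c(X, ℝ) | ∀ x, f x ≤ O.indicator (fun _ => (1 : ℝ)) x}, b ≤ τ.toFun O := by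
      rintro _ ⟨f, hf, rfl⟩
      exact τ.quasiInt_le hO hO' hf
    refine le_antisymm ?_ ?_
    · obtain ⟨f, -, hfO⟩ := TopMeasure.exists_between isCompact_empty hO (empty_subset O)
      exact csSup_le ⟨_, f, hfO, rfl⟩ hbdd
    · refine τ.le_of_compact_le hO hO' fun K hK hKO => ?_
      obtain ⟨f, hKf, hfO⟩ := TopMeasure.exists_between hK hO hKO
      exact (τ.le_quasiInt hK hKf).trans (le_csSup ⟨_, hbdd⟩ ⟨f, hfO, rfl⟩)

end
end

section
/- (Representation Theorem) Let X be a locally compact Hausdorff space. The map ζ ↦ τ_ζ, sending a quasi-integral to its induced set function, is a bijection from the set of quasi-integrals on X onto the set of topological measures on X. -/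
/-!
A quasi-integral is linear only on the functions of a single `h ∈ C_c(X)`, so every use of
additivity below exhibits the functions concerned as functions of one `h`.

*From `ζ` to `τ_ζ`.* Nonnegative `f`, `g` with `f g = 0` are the two parts of `f - g`, so `ζ` is
additive on them (`q_add_disjoint`); this gives additivity of `τ_ζ` on two compact or two open
sets. Outer regularity comes from the superlevel sets `{f > r}` with `r → 1`, inner regularity from
comparing `f` with `(f - ε)⁺` by means of the Lipschitz property. When a compact `K` and an open
`O` have an open union, one uses `p` and `g` with `g = 1` wherever `p > 0`, both functions of
`p + g` (`mixed_open`). The case of a compact union follows by taking complements in a relatively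
compact open neighbourhood (`mixed_compact`).

*Uniqueness.* Cut `f ≥ 0` into horizontal layers of height `h`. The layers are functions of `f`, so
`ζ` is additive on them, and `ζ₁` of a layer is at most `τ` of a superlevel set, which is at most
`ζ₂` of the layer below. Summing and letting `h → 0` yields `ζ₁ f ≤ ζ₂ f`.

*From `τ` to `ζ`.* Fix `f`. A topological measure need not be subadditive, but `C ↦ τ(f⁻¹ C)` on
compact subsets of the punctured line is: by outer regularity it suffices to consider unions of
cells of a fine grid, where its value is a sum over open cells and grid points (`t_cells`,
`t_subadd`). Hence it is a content, and it extends to a measure `μ`, the distribution of `f`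
(`exists_measure`). Put `ζ(g) = ∫₀^∞ τ({g > t}) dt - ∫₀^∞ τ({g < -t}) dt`. The layer-cake formula
gives `ζ(φ ∘ f) = ∫ φ dμ`, which is linear in `φ`. Monotonicity is clear, and the Lipschitz estimate
follows from additivity on `g` and a bump function equal to `1` on the support of `g`. Regularity
of `τ` then shows that `ζ` induces `τ`.
-/

open Set Topology
open scoped CompactlySupported

noncomputable section

variable {X : Type*} [TopologicalSpace X]

namespace RepThm

/-! ### Auxiliary functions in `C_c(X)` -/

/-- The composition `φ ∘ f`, as an element of `C_c(X)`, for `φ` continuous with `φ 0 = 0`. -/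
def post (f : C_c(X, ℝ)) (φ : ℝ → ℝ) (hφ : Continuous φ) (h0 : φ 0 = 0) : C_c(X, ℝ) where
  toFun := φ ∘ f
  continuous_toFun := hφ.comp f.continuous
  hasCompactSupport' := f.hasCompactSupport.comp_left h0

@[simp] lemma post_apply (f : C_c(X, ℝ)) (φ : ℝ → ℝ) (hφ : Continuous φ) (h0 : φ 0 = 0) (x : X) :
    post f φ hφ h0 x = φ (f x) := rfl

lemma urysohn [T2Space X] [LocallyCompactSpace X] {K O : Set X} (hK : IsCompact K)
    (hO : IsOpen O) (h : K ⊆ O) :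
    ∃ u : C_c(X, ℝ), (∀ x, 0 ≤ u x) ∧ (∀ x, u x ≤ 1) ∧ (∀ x ∈ K, u x = 1) ∧
      (∀ x, x ∉ O → u x = 0) := by
  obtain ⟨f, h1, h0, hc, hI⟩ := exists_continuous_one_zero_of_isCompact hK hO.isClosed_compl
    (disjoint_compl_right_iff_subset.mpr h)
  exact ⟨⟨f, hc⟩, fun x => (hI x).1, fun x => (hI x).2, fun x hx => h1 hx, fun x hx => h0 hx⟩

lemma isCompact_closure_of_eq_zero {O : Set X} (f : C_c(X, ℝ)) (h : ∀ x ∈ O, f x ≠ 0) :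
    IsCompact (closure O) :=
  f.hasCompactSupport.isCompact.of_isClosed_subset isClosed_closure
    (closure_mono fun x hx => h x hx)

lemma isCompact_of_ne_zero {K : Set X} (hK : IsClosed K) (f : C_c(X, ℝ)) (h : ∀ x ∈ K, f x ≠ 0) :
    IsCompact K :=
  f.hasCompactSupport.isCompact.of_isClosed_subset hK
    (fun x hx => subset_tsupport _ (h x hx))

lemma eq_zero_of_notMem {K : Set X} {f : C_c(X, ℝ)} (h : tsupport ⇑f ⊆ K) {x : X} (hx : x ∉ K) :
    f x = 0 := image_eq_zero_of_notMem_tsupport fun h' => hx (h h')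

lemma indicator_le_iff {Y : Type*} {K : Set Y} {f : Y → ℝ} :
    (∀ x, K.indicator (fun _ => (1 : ℝ)) x ≤ f x) ↔ (∀ x, 0 ≤ f x) ∧ ∀ x ∈ K, 1 ≤ f x := by
  refine ⟨fun h => ⟨fun x => le_trans (indicator_nonneg (by simp) x) (h x), fun x hx => ?_⟩,
    fun h x => ?_⟩
  · simpa [hx] using h x
  · by_cases hx : x ∈ K
    · simpa [hx] using h.2 x hx
    · simpa [hx] using h.1 x

lemma le_indicator_iff {Y : Type*} {O : Set Y} {f : Y → ℝ} :
    (∀ x, f x ≤ O.indicator (fun _ => (1 : ℝ)) x) ↔ (∀ x, f x ≤ 1) ∧ ∀ x, x ∉ O → f x ≤ 0 := by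
  refine ⟨fun h => ⟨fun x => le_trans (h x) (indicator_le_self' (by simp) x), fun x hx => ?_⟩,
    fun h x => ?_⟩
  · simpa [hx] using h x
  · by_cases hx : x ∈ O
    · simpa [hx] using h.1 x
    · simpa [hx] using h.2 x hx

/-! ### Elementary properties of quasi-integrals -/

section Quasi

variable (ζ : QuasiIntegral X)

lemma q_zero : ζ.toFun 0 = 0 := by
  have := ζ.quasilin_smul' 0 id continuous_id rfl 0 0 0 (by simp) (by simp)
  simpa using this

lemma q_smul (c : ℝ) (f g : C_c(X, ℝ)) (h : ∀ x, g x = c * f x) :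
    ζ.toFun g = c * ζ.toFun f :=
  ζ.quasilin_smul' f id continuous_id rfl c f g (by simp) (by simpa using h)

lemma q_nonneg (f : C_c(X, ℝ)) (h : ∀ x, 0 ≤ f x) : 0 ≤ ζ.toFun f := by
  rw [← q_zero ζ]; exact ζ.mono' _ _ (by simpa using h)

lemma q_neg (f : C_c(X, ℝ)) : ζ.toFun (-f) = -ζ.toFun f := by
  rw [q_smul ζ (-1) f (-f) (by simp)]; ring

/-- Two nonnegative functions with disjoint supports are the positive and negative part of
their difference, so a quasi-integral is additive on them. -/
lemma q_add_disjoint (f g : C_c(X, ℝ)) (hf : ∀ x, 0 ≤ f x) (hg : ∀ x, 0 ≤ g x)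
    (hfg : ∀ x, f x = 0 ∨ g x = 0) : ζ.toFun (f + g) = ζ.toFun f + ζ.toFun g := by
  refine ζ.quasilin_add' (f - g) (fun t => max t 0) (fun t => max (-t) 0) (by fun_prop)
    (by fun_prop) (by simp) (by simp) f g (f + g) ?_ ?_ ?_ <;> intro x <;>
    have h1 := hf x <;> have h2 := hg x <;> rcases hfg x with h | h <;>
    simp [h, h1, h2]

lemma q_sub_parts (f : C_c(X, ℝ)) : ζ.toFun f =
    ζ.toFun (post f (fun t => max t 0) (by fun_prop) (by simp)) -
    ζ.toFun (post f (fun t => max (-t) 0) (by fun_prop) (by simp)) := by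
  rw [sub_eq_add_neg, ← q_neg]
  refine ζ.quasilin_add' f (fun t => max t 0) (fun t => - max (-t) 0) (by fun_prop)
    (by fun_prop) (by simp) (by simp) _ _ _ (by simp) (by simp) ?_
  intro x
  have := max_zero_sub_max_neg_zero_eq_self (f x)
  simp only [← sub_eq_add_neg]; exact this.symm

variable {ζ}

lemma tauCompact_le {K : Set X} {f : C_c(X, ℝ)} (h0 : ∀ x, 0 ≤ f x) (h1 : ∀ x ∈ K, 1 ≤ f x) :
    tauCompact ζ K ≤ ζ.toFun f := by
  refine csInf_le ⟨0, ?_⟩ ⟨f, indicator_le_iff.2 ⟨h0, h1⟩, rfl⟩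
  rintro _ ⟨g, hg, rfl⟩
  exact q_nonneg _ _ (indicator_le_iff.1 hg).1

lemma le_tauCompact [T2Space X] [LocallyCompactSpace X] {K : Set X} (hK : IsCompact K) {a : ℝ}
    (h : ∀ f : C_c(X, ℝ), (∀ x, 0 ≤ f x) → (∀ x ∈ K, 1 ≤ f x) → a ≤ ζ.toFun f) :
    a ≤ tauCompact ζ K := by
  refine le_csInf ?_ ?_
  · obtain ⟨u, h0, -, h1, -⟩ := urysohn hK isOpen_univ (subset_univ _)
    exact ⟨_, u, indicator_le_iff.2 ⟨h0, fun x hx => (h1 x hx).ge⟩, rfl⟩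
  · rintro _ ⟨f, hf, rfl⟩
    exact h f (indicator_le_iff.1 hf).1 (indicator_le_iff.1 hf).2

lemma le_tauOpen [T2Space X] [LocallyCompactSpace X] {O : Set X} (hO : IsCompact (closure O))
    {f : C_c(X, ℝ)} (h1 : ∀ x, f x ≤ 1) (h0 : ∀ x, x ∉ O → f x ≤ 0) :
    ζ.toFun f ≤ tauOpen ζ O := by
  obtain ⟨u, hu0, -, hu1, -⟩ := urysohn hO isOpen_univ (subset_univ _)
  refine le_csSup ⟨ζ.toFun u, ?_⟩ ⟨f, le_indicator_iff.2 ⟨h1, h0⟩, rfl⟩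
  rintro _ ⟨g, hg, rfl⟩
  have hg := le_indicator_iff.1 hg
  refine ζ.mono' _ _ fun x => ?_
  by_cases hx : x ∈ O
  · rw [hu1 x (subset_closure hx)]; exact hg.1 x
  · exact (hg.2 x hx).trans (hu0 x)

/-- In the supremum defining `τ_ζ(O)` it suffices to consider functions `0 ≤ f ≤ 1_O`. -/
lemma tauOpen_le {O : Set X} {a : ℝ}
    (h : ∀ f : C_c(X, ℝ), (∀ x, 0 ≤ f x) → (∀ x, f x ≤ 1) → (∀ x, x ∉ O → f x = 0) →
      ζ.toFun f ≤ a) :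
    tauOpen ζ O ≤ a := by
  refine csSup_le ⟨_, 0, le_indicator_iff.2 ⟨by simp, by simp⟩, rfl⟩ ?_
  rintro _ ⟨f, hf, rfl⟩
  have hf := le_indicator_iff.1 hf
  refine (ζ.mono' _ (post f (fun t => max t 0) (by fun_prop) (by simp))
    fun x => le_max_left _ _).trans (h _ ?_ ?_ ?_)
  · intro x; simp
  · intro x; simpa using hf.1 x
  · intro x hx; simpa using hf.2 x hx

lemma ind_compact {K : Set X} (hK : IsCompact K) : inducedSetFun ζ K = tauCompact ζ K := by
  simp [inducedSetFun, hK]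

end Quasi

section Induced

variable [T2Space X] [LocallyCompactSpace X] {ζ : QuasiIntegral X}

lemma tauOpen_le_tauCompact {O K : Set X} (hK : IsCompact K) (h : O ⊆ K) :
    tauOpen ζ O ≤ tauCompact ζ K := by
  refine tauOpen_le fun f _ f1 fO => le_tauCompact hK fun g g0 g1 => ζ.mono' _ _ fun x => ?_
  by_cases hx : x ∈ O
  · exact (f1 x).trans (g1 x (h hx))
  · rw [fO x hx]; exact g0 x

lemma tauCompact_le_tauOpen {O K : Set X} (hK : IsCompact K) (hO : IsOpen O)
    (hO' : IsCompact (closure O)) (h : K ⊆ O) : tauCompact ζ K ≤ tauOpen ζ O := by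
  obtain ⟨u, u0, u1, uK, uO⟩ := urysohn hK hO h
  exact (tauCompact_le u0 fun x hx => (uK x hx).ge).trans
    (le_tauOpen hO' u1 fun x hx => (uO x hx).le)

lemma ind_open {O : Set X} (hO : IsOpen O) (hO' : IsCompact (closure O)) :
    inducedSetFun ζ O = tauOpen ζ O := by
  by_cases hK : IsCompact O
  · rw [ind_compact hK]
    exact le_antisymm (tauCompact_le_tauOpen hK hO hO' le_rfl) (tauOpen_le_tauCompact hK le_rfl)
  · simp [inducedSetFun, hK, hO, hO']

lemma tauCompact_mono {K L : Set X} (hL : IsCompact L) (h : K ⊆ L) :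
    tauCompact ζ K ≤ tauCompact ζ L :=
  le_tauCompact hL fun _ f0 f1 => tauCompact_le f0 fun x hx => f1 x (h hx)

lemma tauOpen_mono {U V : Set X} (hV : IsCompact (closure V)) (h : U ⊆ V) :
    tauOpen ζ U ≤ tauOpen ζ V :=
  tauOpen_le fun _ _ f1 fU => le_tauOpen hV f1 fun x hx => (fU x fun h' => hx (h h')).le

lemma ind_mono {A B : Set X} (hA : A ∈ Admissible X) (hB : B ∈ Admissible X) (h : A ⊆ B) :
    inducedSetFun ζ A ≤ inducedSetFun ζ B := by
  rcases hA with hA | ⟨hA, hA'⟩ <;> rcases hB with hB | ⟨hB, hB'⟩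
  · rw [ind_compact hA, ind_compact hB]; exact tauCompact_mono hB h
  · rw [ind_compact hA, ind_open hB hB']; exact tauCompact_le_tauOpen hA hB hB' h
  · rw [ind_open hA hA', ind_compact hB]; exact tauOpen_le_tauCompact hB h
  · rw [ind_open hA hA', ind_open hB hB']; exact tauOpen_mono hB' h

lemma ind_nonneg (A : Set X) : 0 ≤ inducedSetFun ζ A := by
  by_cases hA : IsCompact A
  · rw [ind_compact hA]; exact le_tauCompact hA fun f f0 _ => q_nonneg _ _ f0
  by_cases hO : IsOpen A ∧ IsCompact (closure A)
  · rw [ind_open hO.1 hO.2, ← q_zero ζ]; exact le_tauOpen hO.2 (by simp) (by simp)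
  · simp [inducedSetFun, hA, hO]

/-! ### Regularity of the induced set function -/

/-- Outer regularity: `τ_ζ(K)` is approximated by `τ_ζ` of open neighbourhoods of `K`. -/
lemma tauCompact_outer {K : Set X} (hK : IsCompact K) {a : ℝ} (ha : tauCompact ζ K < a) :
    ∃ O, IsOpen O ∧ IsCompact (closure O) ∧ K ⊆ O ∧ tauOpen ζ O < a := by
  by_contra! hc
  refine ha.not_ge (le_tauCompact hK fun f f0 f1 => ?_)
  -- The superlevel set `{f > r}`, `0 < r < 1`, has measure at most `ζ f / r`; let `r → 1`.
  have key : ∀ r : ℝ, 0 < r → r < 1 → r * a ≤ ζ.toFun f := by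
    intro r hr hr1
    have h := hc {x | r < f x} (isOpen_lt continuous_const f.continuous)
      (isCompact_closure_of_eq_zero f fun x (hx : r < f x) => (hr.trans hx).ne')
      fun x hx => hr1.trans_le (f1 x hx)
    have h2 : tauOpen ζ {x | r < f x} ≤ r⁻¹ * ζ.toFun f := by
      rw [← q_smul ζ r⁻¹ f (r⁻¹ • f) (by simp)]
      refine tauOpen_le fun g _ g1 gO => ζ.mono' _ _ fun x => ?_
      rw [CompactlySupportedContinuousMap.smul_apply, smul_eq_mul]
      by_cases hx : r < f x
      · refine (g1 x).trans ?_
        rw [inv_mul_eq_div, one_le_div hr]; exact hx.le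
      · rw [gO x hx]; exact mul_nonneg (inv_nonneg.2 hr.le) (f0 x)
    calc r * a ≤ r * (r⁻¹ * ζ.toFun f) := mul_le_mul_of_nonneg_left (h.trans h2) hr.le
      _ = ζ.toFun f := by field_simp
  have hlim : Filter.Tendsto (fun r : ℝ => r * a) (𝓝[<] 1) (𝓝 (1 * a)) :=
    ((continuous_id.mul continuous_const).tendsto 1).mono_left nhdsWithin_le_nhds
  rw [one_mul] at hlim
  refine le_of_tendsto hlim ?_
  filter_upwards [Ioo_mem_nhdsLT (zero_lt_one (α := ℝ))] with r hr using key r hr.1 hr.2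

/-- Inner regularity, the only place where Lipschitz continuity of `ζ` enters. -/
lemma tauOpen_inner {O : Set X} {a : ℝ} (ha : a < tauOpen ζ O) :
    ∃ K, IsCompact K ∧ K ⊆ O ∧ a < tauCompact ζ K := by
  by_contra! hc
  refine ha.not_ge (tauOpen_le fun f f0 f1 fO => ?_)
  obtain ⟨N, hN, hL⟩ := ζ.lipschitz' (tsupport f) f.hasCompactSupport
  -- Compare `f` with `(f - ε)⁺`, whose support lies in the compact set `{f ≥ ε} ⊆ O`.
  have key : ∀ ε : ℝ, 0 < ε → ζ.toFun f ≤ a + N * ε := by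
    intro ε hε
    have hKc : IsCompact {x | ε ≤ f x} :=
      isCompact_of_ne_zero (isClosed_le continuous_const f.continuous) f
        fun x (hx : ε ≤ f x) => (hε.trans_le hx).ne'
    have h1 := hc {x | ε ≤ f x} hKc fun x (hx : ε ≤ f x) => by
      by_contra h; rw [fO x h] at hx; linarith
    set g : C_c(X, ℝ) := post f (fun t => max (t - ε) 0) (by fun_prop) (by simp [hε.le])
    have hg : ζ.toFun g ≤ tauCompact ζ {x | ε ≤ f x} := by
      refine le_tauCompact hKc fun u u0 u1 => ζ.mono' _ _ fun x => ?_
      by_cases hx : ε ≤ f x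
      · refine le_trans ?_ (u1 x hx)
        simp only [g, post_apply]
        exact max_le (by linarith [f1 x]) zero_le_one
      · simp only [g, post_apply]
        rw [max_eq_right (by linarith)]; exact u0 x
    have hsup : tsupport ⇑g ⊆ tsupport ⇑f := by
      refine closure_mono fun x hx h => hx ?_
      have h : f x = 0 := h
      simp [g, h, hε.le]
    have h2 := hL f g le_rfl hsup
    have h3 : ⨆ x, |f x - g x| ≤ ε := by
      refine Real.iSup_le (fun x => ?_) hε.le
      simp only [g, post_apply]
      rw [abs_le]
      rcases le_total (f x - ε) 0 with h | h
      · rw [max_eq_right h]; constructor <;> linarith [f0 x]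
      · rw [max_eq_left h]; constructor <;> linarith
    have h4 := mul_le_mul_of_nonneg_left h3 hN
    have h5 := le_abs_self (ζ.toFun f - ζ.toFun g)
    linarith
  have hlim : Filter.Tendsto (fun ε : ℝ => a + N * ε) (𝓝[>] 0) (𝓝 (a + N * 0)) :=
    Continuous.tendsto (by fun_prop) 0 |>.mono_left nhdsWithin_le_nhds
  rw [mul_zero, add_zero] at hlim
  refine ge_of_tendsto hlim ?_
  filter_upwards [self_mem_nhdsWithin] with ε hε using key ε hε

/-! ### Additivity of the induced set function -/

lemma tauCompact_add {K L : Set X} (hK : IsCompact K) (hL : IsCompact L) (h : Disjoint K L) :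
    tauCompact ζ (K ∪ L) = tauCompact ζ K + tauCompact ζ L := by
  obtain ⟨U, V, hU, hV, hKU, hLV, hUV⟩ := SeparatedNhds.of_isCompact_isCompact hK hL h
  obtain ⟨u, u0, u1, uK, uU⟩ := urysohn hK hU hKU
  obtain ⟨v, v0, v1, vL, vV⟩ := urysohn hL hV hLV
  have huv : ∀ x, u x = 0 ∨ v x = 0 := fun x => by
    by_cases hx : x ∈ U
    · exact Or.inr (vV x (disjoint_left.1 hUV hx))
    · exact Or.inl (uU x hx)
  have hadd : ∀ f g : C_c(X, ℝ), (∀ x, 0 ≤ f x) → (∀ x, 0 ≤ g x) →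
      ζ.toFun (f ⊓ u + g ⊓ v) = ζ.toFun (f ⊓ u) + ζ.toFun (g ⊓ v) := by
    intro f g f0 g0
    refine q_add_disjoint ζ _ _ (fun x => le_min (f0 x) (u0 x)) (fun x => le_min (g0 x) (v0 x)) ?_
    intro x
    rcases huv x with h | h
    · left; simp [h, f0 x]
    · right; simp [h, g0 x]
  refine le_antisymm ?_ ?_
  · rw [← sub_le_iff_le_add]
    refine le_tauCompact hK fun f f0 f1 => ?_
    rw [sub_le_comm]
    refine le_tauCompact hL fun g g0 g1 => ?_
    have h1 : tauCompact ζ (K ∪ L) ≤ ζ.toFun (f ⊓ u + g ⊓ v) := by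
      refine tauCompact_le (fun x => add_nonneg (le_min (f0 x) (u0 x)) (le_min (g0 x) (v0 x))) ?_
      rintro x (hx | hx)
      · have : 0 ≤ (g ⊓ v) x := le_min (g0 x) (v0 x)
        have : 1 ≤ (f ⊓ u) x := le_min (f1 x hx) (uK x hx).ge
        simp only [CompactlySupportedContinuousMap.add_apply]; linarith
      · have : 0 ≤ (f ⊓ u) x := le_min (f0 x) (u0 x)
        have : 1 ≤ (g ⊓ v) x := le_min (g1 x hx) (vL x hx).ge
        simp only [CompactlySupportedContinuousMap.add_apply]; linarith
    rw [hadd f g f0 g0] at h1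
    have h2 := ζ.mono' (f ⊓ u) f fun x => min_le_left _ _
    have h3 := ζ.mono' (g ⊓ v) g fun x => min_le_left _ _
    linarith
  · refine le_tauCompact (hK.union hL) fun f f0 f1 => ?_
    have h1 : tauCompact ζ K ≤ ζ.toFun (f ⊓ u) := tauCompact_le
      (fun x => le_min (f0 x) (u0 x)) fun x hx => le_min (f1 x (Or.inl hx)) (uK x hx).ge
    have h2 : tauCompact ζ L ≤ ζ.toFun (f ⊓ v) := tauCompact_le
      (fun x => le_min (f0 x) (v0 x)) fun x hx => le_min (f1 x (Or.inr hx)) (vL x hx).ge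
    have h3 : ζ.toFun (f ⊓ u + f ⊓ v) ≤ ζ.toFun f := by
      refine ζ.mono' _ _ fun x => ?_
      simp only [CompactlySupportedContinuousMap.add_apply,
        CompactlySupportedContinuousMap.inf_apply]
      rcases huv x with h | h
      · rw [h, min_eq_right (f0 x), zero_add]; exact min_le_left _ _
      · rw [h, min_eq_right (f0 x), add_zero]; exact min_le_left _ _
    rw [hadd f f f0 f0] at h3
    linarith

lemma tauOpen_add {U V : Set X} (hU : IsOpen U) (hV : IsOpen V) (hU' : IsCompact (closure U))
    (hV' : IsCompact (closure V)) (h : Disjoint U V) :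
    tauOpen ζ (U ∪ V) = tauOpen ζ U + tauOpen ζ V := by
  have hUV : IsCompact (closure (U ∪ V)) := by rw [closure_union]; exact hU'.union hV'
  refine le_antisymm ?_ ?_
  · refine le_of_forall_lt fun a ha => ?_
    obtain ⟨K, hK, hKUV, haK⟩ := tauOpen_inner ha
    have e1 : K = K \ V ∪ K \ U := by
      rw [← sdiff_inter, (disjoint_iff_inter_eq_empty.1 h.symm), sdiff_empty]
    have hd : Disjoint (K \ V) (K \ U) := disjoint_left.2 fun x hx hx' =>
      (hKUV hx.1).elim hx'.2 hx.2
    rw [e1, tauCompact_add (hK.diff hV) (hK.diff hU) hd] at haK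
    have h1 : tauCompact ζ (K \ V) ≤ tauOpen ζ U :=
      tauCompact_le_tauOpen (hK.diff hV) hU hU' fun x hx => (hKUV hx.1).resolve_right hx.2
    have h2 : tauCompact ζ (K \ U) ≤ tauOpen ζ V :=
      tauCompact_le_tauOpen (hK.diff hU) hV hV' fun x hx => (hKUV hx.1).resolve_left hx.2
    linarith
  · rw [← le_sub_iff_add_le]
    refine tauOpen_le fun f f0 f1 fU => ?_
    rw [le_sub_comm]
    refine tauOpen_le fun g g0 g1 gV => ?_
    have hfg : ∀ x, f x = 0 ∨ g x = 0 := fun x => by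
      by_cases hx : x ∈ U
      · exact Or.inr (gV x (disjoint_left.1 h hx))
      · exact Or.inl (fU x hx)
    have := q_add_disjoint ζ f g f0 g0 hfg
    have h2 : ζ.toFun (f + g) ≤ tauOpen ζ (U ∪ V) := by
      refine le_tauOpen hUV (fun x => ?_) fun x hx => ?_
      · rcases hfg x with h | h <;> simp [h, f1 x, g1 x]
      · simp [fU x fun h => hx (Or.inl h), gV x fun h => hx (Or.inr h)]
    linarith

lemma add_le_of_disjoint {K O : Set X} {a : ℝ} (hK : IsCompact K)
    (h : Disjoint K O) (ha : ∀ L, IsCompact L → L ⊆ K ∪ O → tauCompact ζ L ≤ a) :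
    tauCompact ζ K + tauOpen ζ O ≤ a := by
  rw [← le_sub_iff_add_le']
  refine le_of_forall_lt fun b hb => ?_
  obtain ⟨L, hL, hLO, hbL⟩ := tauOpen_inner hb
  have := ha (K ∪ L) (hK.union hL) (union_subset_union_right _ hLO)
  rw [tauCompact_add hK hL (h.mono_right hLO)] at this
  linarith

/-- The mixed case of additivity when the union is open. -/
lemma mixed_open {K O : Set X} (hK : IsCompact K) (hO' : IsCompact (closure O))
    (hA : IsOpen (K ∪ O)) (hA' : IsCompact (closure (K ∪ O)))
    (h : Disjoint K O) : tauOpen ζ (K ∪ O) = tauCompact ζ K + tauOpen ζ O := by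
  refine le_antisymm ?_ (add_le_of_disjoint hK h
    fun L hL hLA => tauCompact_le_tauOpen hL hA hA' hLA)
  refine le_of_forall_lt fun a ha => ?_
  obtain ⟨L, hL, hLA, haL⟩ := tauOpen_inner ha
  refine haL.trans_le ?_
  rw [← sub_le_iff_le_add]
  refine le_tauCompact hK fun f f0 f1 => ?_
  obtain ⟨w, w0, w1, wK, wA⟩ := urysohn (hK.union hL) hA (union_subset subset_union_left hLA)
  -- `g = 1` wherever `u > 0`, so `p = min f u` and `g` are both functions of `p + g`.
  set g : C_c(X, ℝ) := post w (fun t => min (2 * t) 1) (by fun_prop) (by simp) with hg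
  set u : C_c(X, ℝ) := post w (fun t => max (2 * t - 1) 0) (by fun_prop) (by simp) with hu
  set p : C_c(X, ℝ) := f ⊓ u with hp
  have hu0 : ∀ x, 0 ≤ u x := fun x => by simp [hu]
  have hu1 : ∀ x, u x ≤ 1 := fun x => by
    simp only [hu, post_apply]; exact max_le (by linarith [w1 x]) zero_le_one
  have hg0 : ∀ x, 0 ≤ g x := fun x => by simp [hg, w0 x]
  have hg1 : ∀ x, g x ≤ 1 := fun x => by simp [hg]
  have hp0 : ∀ x, 0 ≤ p x := fun x => le_min (f0 x) (hu0 x)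
  have hp1 : ∀ x, p x ≤ 1 := fun x => (min_le_right _ _).trans (hu1 x)
  have hpg : ∀ x, p x = 0 ∨ g x = 1 := by
    intro x
    rcases le_total (2 * w x) 1 with h | h
    · left
      have : u x = 0 := by simp only [hu, post_apply]; exact max_eq_right (by linarith)
      simp [hp, this, f0 x]
    · right; simp only [hg, post_apply]; exact min_eq_right h
  have hpK : ∀ x ∈ K, 1 ≤ p x := by
    intro x hx
    refine le_min (f1 x hx) ?_
    simp only [hu, post_apply, wK x (Or.inl hx)]; norm_num
  have h1 : ζ.toFun g = ζ.toFun p + ζ.toFun (g - p) := by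
    refine ζ.quasilin_add' (p + g) (fun t => max (t - 1) 0) (fun t => min t 1 - max (t - 1) 0)
      (by fun_prop) (by fun_prop) (by simp) (by simp) _ _ _ ?_ ?_ ?_ <;> intro x <;>
      have h1 := hp0 x <;> have h3 := hg1 x <;>
      rcases hpg x with h | h <;> simp [h, h1, h3]
  have h2 : tauCompact ζ L ≤ ζ.toFun g := tauCompact_le hg0 fun x hx => by
    simp only [hg, post_apply, wK x (Or.inr hx)]; norm_num
  have h3 : ζ.toFun (g - p) ≤ tauOpen ζ O := by
    refine le_tauOpen hO' (fun x => ?_) fun x hx => ?_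
    · simp only [CompactlySupportedContinuousMap.sub_apply]; linarith [hg1 x, hp0 x]
    · simp only [CompactlySupportedContinuousMap.sub_apply]
      by_cases hxK : x ∈ K
      · linarith [hpK x hxK, hg1 x]
      · have : w x = 0 := wA x (by rintro (h | h); exacts [hxK h, hx h])
        have : g x = 0 := by simp [hg, this]
        linarith [hp0 x]
  have h4 : ζ.toFun p ≤ ζ.toFun f := ζ.mono' _ _ fun x => min_le_left _ _
  linarith

/-- The mixed case of additivity when the union is compact, deduced from the open case by
passing to complements in a relatively compact open neighbourhood `B` of `K ∪ O`. -/
lemma mixed_compact {K O : Set X} (hK : IsCompact K) (hO : IsOpen O)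
    (hO' : IsCompact (closure O)) (hA : IsCompact (K ∪ O)) (h : Disjoint K O) :
    tauCompact ζ (K ∪ O) = tauCompact ζ K + tauOpen ζ O := by
  obtain ⟨B, hB, hAB, -, hB'⟩ := exists_open_between_and_isCompact_closure hA isOpen_univ
    (subset_univ _)
  have hsub : ∀ S : Set X, IsCompact (closure (B \ S)) := fun S =>
    hB'.of_isClosed_subset isClosed_closure (closure_mono sdiff_subset)
  have e1 : (K ∪ O) ∪ B \ (K ∪ O) = B := union_sdiff_cancel hAB
  have e2 : K ∪ B \ K = B := union_sdiff_cancel (subset_union_left.trans hAB)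
  have e3 : O ∪ B \ (K ∪ O) = B \ K := by
    ext x
    have h1 : x ∈ O → x ∈ B := fun hx => hAB (Or.inr hx)
    have h2 : x ∈ O → x ∉ K := fun hx hx' => disjoint_left.1 h hx' hx
    simp only [mem_union, mem_sdiff]; tauto
  have h1 := mixed_open (ζ := ζ) hA (hsub (K ∪ O)) (by rw [e1]; exact hB) (by rw [e1]; exact hB')
    disjoint_sdiff_right
  have h2 := mixed_open (ζ := ζ) hK (hsub K) (by rw [e2]; exact hB) (by rw [e2]; exact hB')
    disjoint_sdiff_right
  have h3 := tauOpen_add (ζ := ζ) hO (hB.sdiff hA.isClosed) hO' (hsub (K ∪ O))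
    (disjoint_sdiff_right.mono_left subset_union_right)
  rw [e1] at h1
  rw [e2] at h2
  rw [e3] at h3
  linarith

lemma mixed {K O : Set X} (hK : IsCompact K) (hO : IsOpen O) (hO' : IsCompact (closure O))
    (hA : K ∪ O ∈ Admissible X) (h : Disjoint K O) :
    inducedSetFun ζ (K ∪ O) = inducedSetFun ζ K + inducedSetFun ζ O := by
  rw [ind_compact hK, ind_open hO hO']
  rcases hA with hA | ⟨hA, hA'⟩
  · rw [ind_compact hA]; exact mixed_compact hK hO hO' hA h
  · rw [ind_open hA hA']; exact mixed_open hK hO' hA hA' h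

lemma ind_add {A B : Set X} (hA : A ∈ Admissible X) (hB : B ∈ Admissible X)
    (hAB : A ∪ B ∈ Admissible X) (h : Disjoint A B) :
    inducedSetFun ζ (A ∪ B) = inducedSetFun ζ A + inducedSetFun ζ B := by
  rcases hA with hA | ⟨hA, hA'⟩ <;> rcases hB with hB | ⟨hB, hB'⟩
  · rw [ind_compact hA, ind_compact hB, ind_compact (hA.union hB)]; exact tauCompact_add hA hB h
  · exact mixed hA hB hB' hAB h
  · rw [union_comm, add_comm]; rw [union_comm] at hAB; exact mixed hB hA hA' hAB h.symm
  · rw [ind_open hA hA', ind_open hB hB', ind_open (hA.union hB)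
      (by rw [closure_union]; exact hA'.union hB')]
    exact tauOpen_add hA hB hA' hB' h

variable (ζ) in
/-- The topological measure induced by a quasi-integral. -/
def inducedTop : TopMeasure X where
  toFun := inducedSetFun ζ
  zero_of_not_mem' A hA := by
    have h1 : ¬ IsCompact A := fun h => hA (Or.inl h)
    have h2 : ¬ (IsOpen A ∧ IsCompact (closure A)) := fun h => hA (Or.inr h)
    simp [inducedSetFun, h1, h2]
  nonneg' := ind_nonneg
  additive' A B hA hB hAB h := ind_add hA hB hAB h
  mono' A B hA hB h := ind_mono hA hB h
  outer_reg' K hK := by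
    refine le_antisymm (le_csInf ?_ ?_) (le_of_forall_gt_imp_ge_of_dense fun a ha => ?_)
    · obtain ⟨B, hB, hAB, -, hB'⟩ := exists_open_between_and_isCompact_closure hK isOpen_univ
        (subset_univ _)
      exact ⟨_, B, ⟨hB, hB', hAB⟩, rfl⟩
    · rintro _ ⟨O, ⟨hO, hO', h⟩, rfl⟩
      exact ind_mono (Or.inl hK) (Or.inr ⟨hO, hO'⟩) h
    · rw [ind_compact hK] at ha
      obtain ⟨O, hO, hO', h, hlt⟩ := tauCompact_outer hK ha
      rw [← ind_open hO hO'] at hlt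
      refine le_trans (csInf_le ⟨0, ?_⟩ ⟨O, ⟨hO, hO', h⟩, rfl⟩) hlt.le
      rintro _ ⟨O, -, rfl⟩
      exact ind_nonneg O
  inner_reg' O hO hO' := by
    refine le_antisymm (le_of_forall_lt_imp_le_of_dense fun a ha => ?_)
      (csSup_le (Set.Nonempty.image _ ⟨∅, isCompact_empty, empty_subset _⟩) ?_)
    · rw [ind_open hO hO'] at ha
      obtain ⟨K, hK, h, hlt⟩ := tauOpen_inner ha
      rw [← ind_compact hK] at hlt
      refine hlt.le.trans (le_csSup ⟨inducedSetFun ζ O, ?_⟩ ⟨K, ⟨hK, h⟩, rfl⟩)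
      rintro _ ⟨L, ⟨hL, hLO⟩, rfl⟩
      exact ind_mono (Or.inl hL) (Or.inr ⟨hO, hO'⟩) hLO
    · rintro _ ⟨L, ⟨hL, hLO⟩, rfl⟩
      exact ind_mono (Or.inl hL) (Or.inr ⟨hO, hO'⟩) hLO

end Induced

/-! ### A quasi-integral is determined by its induced set function -/

/-- The `k`-th horizontal layer of `f` of height `h`, rescaled to take values in `[0, 1]`. -/
def layer (f : C_c(X, ℝ)) (h : ℝ) (k : ℕ) : C_c(X, ℝ) :=
  post f (fun t => max 0 (min 1 (h⁻¹ * (max t 0) - k))) (by fun_prop) (by simp)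

/-- Truncating `f ≥ 0` at height `n h` is stacking its first `n` layers; each step is an instance
of quasi-linearity on the functions of `f`. -/
lemma layer_sum (ζ : QuasiIntegral X) (f : C_c(X, ℝ)) {h : ℝ} (hh : 0 < h) (f0 : ∀ x, 0 ≤ f x)
    (n : ℕ) : ζ.toFun (post f (fun t => min t (n * h) ⊔ 0) (by fun_prop)
      (by simp)) = ∑ k ∈ Finset.range n, h * ζ.toFun (layer f h k) := by
  induction n with
  | zero =>
    rw [Finset.sum_range_zero]
    refine Eq.trans (congrArg ζ.toFun ?_) (q_zero ζ)
    ext x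
    simp
  | succ n ih =>
    rw [Finset.sum_range_succ, ← ih, ← q_smul ζ h _ (h • layer f h n) (by simp)]
    refine ζ.quasilin_add' f (fun t => min t (n * h) ⊔ 0)
      (fun t => h * max 0 (min 1 (h⁻¹ * (max t 0) - n))) (by fun_prop) (by fun_prop)
      (by simp) (by simp) _ _ _ (by simp) (by simp [layer]) ?_
    intro x
    have h0 := f0 x
    obtain ⟨y, hy⟩ : ∃ y, f x = h * y := ⟨h⁻¹ * f x, by field_simp⟩
    have hy0 : 0 ≤ y := by
      rw [hy] at h0; exact nonneg_of_mul_nonneg_right h0 hh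
    have hn : (0 : ℝ) ≤ n := n.cast_nonneg
    have e : h⁻¹ * (h * y) = y := by field_simp
    simp only [post_apply, hy]
    rw [max_eq_left (by positivity : (0 : ℝ) ≤ h * y), e, mul_comm _ h, mul_comm _ h,
      ← mul_min_of_nonneg _ _ hh.le, ← mul_min_of_nonneg _ _ hh.le, max_eq_left, max_eq_left,
      ← mul_add]
    · congr 1
      push_cast
      rcases le_total y n with h1 | h1
      · rw [min_eq_left (by linarith), min_eq_left h1, min_eq_right (by linarith),
          max_eq_left (by linarith), add_zero]
      · rcases le_total y (n + 1) with h2 | h2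
        · rw [min_eq_left h2, min_eq_right h1, min_eq_right (by linarith),
            max_eq_right (by linarith)]; ring
        · rw [min_eq_right h2, min_eq_right h1, min_eq_left (by linarith),
            max_eq_right (by linarith)]
    · positivity
    · positivity

section Injective

variable [T2Space X] [LocallyCompactSpace X]

/-- If `ζ₁`, `ζ₂` induce the same set function, then `ζ₁` of each layer of `f` is at most
`ζ₂` of the layer below; summing over layers of height `h → 0` gives `ζ₁ f ≤ ζ₂ f`. -/
lemma le_of_induced_eq {ζ₁ ζ₂ : QuasiIntegral X} (h : inducedSetFun ζ₁ = inducedSetFun ζ₂)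
    (f : C_c(X, ℝ)) (f0 : ∀ x, 0 ≤ f x) : ζ₁.toFun f ≤ ζ₂.toFun f := by
  obtain ⟨M, hM⟩ : ∃ M, ∀ x, f x ≤ M := by
    obtain ⟨M, hM⟩ := (f.hasCompactSupport.isCompact_range f.continuous).bddAbove
    exact ⟨M, fun x => hM ⟨x, rfl⟩⟩
  obtain ⟨u, u0, u1, uK, -⟩ := urysohn f.hasCompactSupport.isCompact isOpen_univ (subset_univ _)
  have key : ∀ ε : ℝ, 0 < ε → ζ₁.toFun f ≤ ζ₂.toFun f + ζ₁.toFun u * ε := by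
    intro ε hε
    obtain ⟨n, hn⟩ := exists_nat_ge (M / ε)
    rw [div_le_iff₀ hε] at hn
    have e : ∀ m : ℕ, n ≤ m → post f (fun t => min t (m * ε) ⊔ 0) (by fun_prop)
        (by simp) = f := by
      intro m hm
      ext x
      have : (n : ℝ) * ε ≤ m * ε := by gcongr
      simp only [post_apply]
      rw [min_eq_left ((hM x).trans (hn.trans this)), max_eq_left (f0 x)]
    have h1 := layer_sum ζ₁ f hε f0 (n + 1)
    have h2 := layer_sum ζ₂ f hε f0 n
    rw [e _ n.le_succ, Finset.sum_range_succ'] at h1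
    rw [e _ le_rfl] at h2
    have h3 : ∀ k, ζ₁.toFun (layer f ε (k + 1)) ≤ ζ₂.toFun (layer f ε k) := by
      intro k
      have hpos : 0 < ((k : ℝ) + 1) * ε := by positivity
      have hKc : IsCompact {x | ((k : ℝ) + 1) * ε ≤ f x} :=
        isCompact_of_ne_zero (isClosed_le continuous_const f.continuous) f
          fun x (hx : _ ≤ f x) => (hpos.trans_le hx).ne'
      have a1 : ζ₁.toFun (layer f ε (k + 1)) ≤ tauCompact ζ₁ {x | ((k : ℝ) + 1) * ε ≤ f x} := by
        refine le_tauCompact hKc fun g g0 g1 => ζ₁.mono' _ _ fun x => ?_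
        simp only [layer, post_apply]
        by_cases hx : ((k : ℝ) + 1) * ε ≤ f x
        · exact le_trans (max_le zero_le_one (min_le_left _ _)) (g1 x hx)
        · refine le_trans (max_le le_rfl ((min_le_right _ _).trans ?_)) (g0 x)
          rw [max_eq_left (f0 x), sub_nonpos, inv_mul_le_iff₀ hε, mul_comm]
          push_cast; exact (not_le.1 hx).le
      have a2 : tauCompact ζ₂ {x | ((k : ℝ) + 1) * ε ≤ f x} ≤ ζ₂.toFun (layer f ε k) := by
        refine tauCompact_le (fun x => by simp [layer]) fun x (hx : _ ≤ f x) => ?_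
        simp only [layer, post_apply]
        refine le_max_of_le_right (le_min le_rfl ?_)
        rw [max_eq_left (f0 x), le_sub_iff_add_le, le_inv_mul_iff₀ hε]
        linarith
      rw [← ind_compact hKc] at a1 a2
      rw [h] at a1
      exact a1.trans a2
    have h4 : ζ₁.toFun (layer f ε 0) ≤ ζ₁.toFun u := by
      refine ζ₁.mono' _ _ fun x => ?_
      by_cases hx : x ∈ tsupport f
      · rw [uK x hx]; exact max_le zero_le_one (min_le_left _ _)
      · simp [layer, image_eq_zero_of_notMem_tsupport hx, u0 x]
    have h5 : ∑ k ∈ Finset.range n, ε * ζ₁.toFun (layer f ε (k + 1)) ≤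
        ∑ k ∈ Finset.range n, ε * ζ₂.toFun (layer f ε k) :=
      Finset.sum_le_sum fun k _ => mul_le_mul_of_nonneg_left (h3 k) hε.le
    have h6 := mul_le_mul_of_nonneg_left h4 hε.le
    rw [h1, h2]
    linarith
  have hlim : Filter.Tendsto (fun ε : ℝ => ζ₂.toFun f + ζ₁.toFun u * ε) (𝓝[>] 0)
      (𝓝 (ζ₂.toFun f + ζ₁.toFun u * 0)) :=
    Continuous.tendsto (by fun_prop) 0 |>.mono_left nhdsWithin_le_nhds
  rw [mul_zero, add_zero] at hlim
  refine ge_of_tendsto hlim ?_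
  filter_upwards [self_mem_nhdsWithin] with ε hε using key ε hε

lemma induced_injective {ζ₁ ζ₂ : QuasiIntegral X} (h : inducedSetFun ζ₁ = inducedSetFun ζ₂) :
    ζ₁ = ζ₂ := by
  have key : ∀ f : C_c(X, ℝ), (∀ x, 0 ≤ f x) → ζ₁.toFun f = ζ₂.toFun f := fun f hf =>
    le_antisymm (le_of_induced_eq h f hf) (le_of_induced_eq h.symm f hf)
  have : ζ₁.toFun = ζ₂.toFun := by
    funext f
    rw [q_sub_parts ζ₁ f, q_sub_parts ζ₂ f, key _ fun x => by simp, key _ fun x => by simp]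
  cases ζ₁; cases ζ₂; simp_all

end Injective

/-! ### The distribution of a function with respect to a topological measure -/

section Distribution

open MeasureTheory TopologicalSpace
open scoped ENNReal NNReal

lemma pre_compact (f : C_c(X, ℝ)) {C : Set ℝ} (hC : IsClosed C) (h0 : (0 : ℝ) ∉ C) :
    IsCompact (f ⁻¹' C) :=
  isCompact_of_ne_zero (hC.preimage f.continuous) f fun x (hx : f x ∈ C) h => h0 (h ▸ hx)

lemma pre_open (f : C_c(X, ℝ)) {U : Set ℝ} (hU : IsOpen U) (h0 : (0 : ℝ) ∉ U) :
    IsOpen (f ⁻¹' U) ∧ IsCompact (closure (f ⁻¹' U)) :=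
  ⟨hU.preimage f.continuous,
    isCompact_closure_of_eq_zero f fun x (hx : f x ∈ U) h => h0 (h ▸ hx)⟩

variable (τ : TopMeasure X)

lemma t_empty : τ.toFun ∅ = 0 := by
  have h : (∅ : Set X) ∈ Admissible X := Or.inl isCompact_empty
  have := τ.additive' ∅ ∅ h h (by simpa using h) (disjoint_empty _)
  simpa using this

/-- Finite additivity of `τ` within a union-closed class `P` of admissible sets; used for the
class of compact sets and for that of relatively compact open sets. -/
lemma t_sum {P : Set X → Prop} (hP0 : P ∅) (hPu : ∀ A B, P A → P B → P (A ∪ B))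
    (hPA : ∀ A, P A → A ∈ Admissible X) {ι : Type*} (J : Finset ι) (U : ι → Set X)
    (hU : ∀ i ∈ J, P (U i)) (hd : Pairwise fun i j => Disjoint (U i) (U j)) :
    P (⋃ i ∈ J, U i) ∧ τ.toFun (⋃ i ∈ J, U i) = ∑ i ∈ J, τ.toFun (U i) := by
  classical
  induction J using Finset.induction_on with
  | empty => simpa [t_empty] using hP0
  | insert a s ha ih =>
    obtain ⟨h1, h2⟩ := ih fun i hi => hU i (Finset.mem_insert_of_mem hi)
    have h3 := hU a (Finset.mem_insert_self a s)
    have h4 := hPu _ _ h3 h1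
    rw [Finset.set_biUnion_insert, Finset.sum_insert ha, ← h2]
    refine ⟨h4, τ.additive' _ _ (hPA _ h3) (hPA _ h1) (hPA _ h4) ?_⟩
    simp only [disjoint_iUnion_right]
    intro i hi
    exact hd (fun h => ha (h ▸ hi))

/-- The union of the closed cells `[kδ, (k+1)δ]`, `k ∈ J`, of the grid of mesh `δ`. -/
def cells (δ : ℝ) (J : Finset ℤ) : Set ℝ := ⋃ k ∈ J, Icc ((k : ℝ) * δ) (((k : ℝ) + 1) * δ)

lemma isClosed_cells (δ : ℝ) (J : Finset ℤ) : IsClosed (cells δ J) :=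
  J.finite_toSet.isClosed_biUnion fun _ _ => isClosed_Icc

lemma cells_union (δ : ℝ) (J₁ J₂ : Finset ℤ) :
    cells δ (J₁ ∪ J₂) = cells δ J₁ ∪ cells δ J₂ := Finset.set_biUnion_union _ _ _

/-- On unions of grid cells the set function `τ ∘ f⁻¹` is computed by summing over the open
cells and the grid points. -/
lemma t_cells (f : C_c(X, ℝ)) {δ : ℝ} (hδ : 0 < δ) (J : Finset ℤ) (h0 : (0 : ℝ) ∉ cells δ J) :
    τ.toFun (f ⁻¹' cells δ J) =
      ∑ k ∈ J, τ.toFun (f ⁻¹' Ioo ((k : ℝ) * δ) (((k : ℝ) + 1) * δ)) +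
      ∑ k ∈ J ∪ J.image (· + 1), τ.toFun (f ⁻¹' {(k : ℝ) * δ}) := by
  have hmem : ∀ k ∈ J, ∀ y ∈ Icc ((k : ℝ) * δ) (((k : ℝ) + 1) * δ), y ∈ cells δ J :=
    fun k hk y hy => mem_iUnion₂.2 ⟨k, hk, hy⟩
  have hmem' : ∀ k ∈ J ∪ J.image (· + 1), (k : ℝ) * δ ∈ cells δ J := by
    intro k hk
    rcases Finset.mem_union.1 hk with hk | hk
    · exact hmem k hk _ ⟨le_rfl, by nlinarith⟩
    · obtain ⟨j, hj, rfl⟩ := Finset.mem_image.1 hk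
      exact hmem j hj _ ⟨by push_cast; nlinarith, by push_cast; exact le_rfl⟩
  have hint : ∀ (a b : ℤ), (a : ℝ) * δ < ((b : ℝ) + 1) * δ → a ≤ b := by
    intro a b h
    have : (a : ℝ) < b + 1 := lt_of_mul_lt_mul_right h hδ.le
    exact Int.lt_add_one_iff.1 (by exact_mod_cast this)
  obtain ⟨o1, o2⟩ := t_sum τ (P := fun U => IsOpen U ∧ IsCompact (closure U)) (by simp)
    (fun A B hA hB => ⟨hA.1.union hB.1, by rw [closure_union]; exact hA.2.union hB.2⟩)
    (fun A hA => Or.inr hA) J (fun k => f ⁻¹' Ioo ((k : ℝ) * δ) (((k : ℝ) + 1) * δ))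
    (fun k hk => pre_open f isOpen_Ioo fun h => h0 (hmem k hk _ (Ioo_subset_Icc_self h)))
    (by
      intro i j hij
      refine Disjoint.preimage _ (disjoint_left.2 fun y hy hy' => hij ?_)
      exact le_antisymm (hint _ _ (hy.1.trans hy'.2)) (hint _ _ (hy'.1.trans hy.2)))
  obtain ⟨c1, c2⟩ := t_sum τ (P := IsCompact) isCompact_empty (fun A B hA hB => hA.union hB)
    (fun A hA => Or.inl hA) (J ∪ J.image (· + 1)) (fun k : ℤ => f ⁻¹' {(k : ℝ) * δ})
    (fun k hk => pre_compact f isClosed_singleton fun h => h0 (h ▸ hmem' k hk))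
    (by
      intro i j hij
      refine Disjoint.preimage _ (disjoint_singleton.2 fun h => hij ?_)
      exact_mod_cast mul_right_cancel₀ hδ.ne' h)
  rw [← o2, ← c2]
  have e : f ⁻¹' cells δ J = (⋃ k ∈ J, f ⁻¹' Ioo ((k : ℝ) * δ) (((k : ℝ) + 1) * δ)) ∪
      ⋃ k ∈ J ∪ J.image (· + 1), f ⁻¹' {(k : ℝ) * δ} := by
    ext x
    constructor
    · intro hx
      obtain ⟨k, hk, hx1, hx2⟩ := mem_iUnion₂.1 (show f x ∈ cells δ J from hx)
      rcases hx1.eq_or_lt with h1 | h1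
      · exact Or.inr (mem_iUnion₂.2 ⟨k, Finset.mem_union_left _ hk, h1.symm⟩)
      rcases hx2.eq_or_lt with h2 | h2
      · refine Or.inr (mem_iUnion₂.2 ⟨k + 1, Finset.mem_union_right _
          (Finset.mem_image_of_mem _ hk), ?_⟩)
        simpa using h2
      · exact Or.inl (mem_iUnion₂.2 ⟨k, hk, h1, h2⟩)
    · rintro (hx | hx)
      · obtain ⟨k, hk, hx⟩ := mem_iUnion₂.1 hx
        exact hmem k hk _ (Ioo_subset_Icc_self hx)
      · obtain ⟨k, hk, hx⟩ := mem_iUnion₂.1 hx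
        have hx : f x = k * δ := hx
        change f x ∈ cells δ J
        rw [hx]; exact hmem' k hk
  have hd : Disjoint (⋃ k ∈ J, f ⁻¹' Ioo ((k : ℝ) * δ) (((k : ℝ) + 1) * δ))
      (⋃ k ∈ J ∪ J.image (· + 1), f ⁻¹' {(k : ℝ) * δ}) := by
    simp only [disjoint_iUnion_right, disjoint_iUnion_left]
    intro i _ j _
    refine Disjoint.preimage _ (disjoint_singleton_right.2 fun h => ?_)
    have h2 : (i : ℝ) < j + 1 := lt_of_mul_lt_mul_right h.2 hδ.le
    have h3 : (j : ℝ) < i := lt_of_mul_lt_mul_right h.1 hδ.le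
    norm_cast at h2 h3
    omega
  have hadm : (⋃ k ∈ J, f ⁻¹' Ioo ((k : ℝ) * δ) (((k : ℝ) + 1) * δ)) ∪
      (⋃ k ∈ J ∪ J.image (· + 1), f ⁻¹' {(k : ℝ) * δ}) ∈ Admissible X := by
    rw [← e]; exact Or.inl (pre_compact f (isClosed_cells δ J) h0)
  rw [← τ.additive' _ _ (Or.inr o1) (Or.inl c1) hadm hd, e]

/-- A compact set of reals is covered by finitely many cells of a sufficiently fine grid, all of
which lie in a given neighbourhood. -/
lemma exists_cells {C U : Set ℝ} (hC : IsCompact C) (hU : IsOpen U) (h : C ⊆ U) :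
    ∃ δ₀ > 0, ∀ δ, 0 < δ → δ < δ₀ → ∃ J : Finset ℤ, C ⊆ cells δ J ∧ cells δ J ⊆ U := by
  obtain ⟨δ₀, h0, hδ₀⟩ := hC.exists_thickening_subset_open hU h
  refine ⟨δ₀, h0, fun δ hδ hδδ => ?_⟩
  obtain ⟨R, hR⟩ := hC.isBounded.subset_closedBall 0
  have hfin : ((fun y : ℝ => ⌊y / δ⌋) '' C).Finite := by
    refine (finite_Icc ⌊-R / δ⌋ ⌊R / δ⌋).subset ?_
    rintro _ ⟨y, hy, rfl⟩
    have hy := hR hy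
    rw [mem_closedBall_zero_iff, Real.norm_eq_abs, abs_le] at hy
    exact ⟨Int.floor_mono (by gcongr; exact hy.1), Int.floor_mono (by gcongr; exact hy.2)⟩
  have hcell : ∀ y : ℝ, y ∈ Icc ((⌊y / δ⌋ : ℝ) * δ) (((⌊y / δ⌋ : ℝ) + 1) * δ) := fun y =>
    ⟨(le_div_iff₀ hδ).1 (Int.floor_le _), ((div_lt_iff₀ hδ).1 (Int.lt_floor_add_one _)).le⟩
  refine ⟨hfin.toFinset, fun y hy => ?_, fun z hz => ?_⟩
  · exact mem_iUnion₂.2 ⟨⌊y / δ⌋, by simpa using ⟨y, hy, rfl⟩, hcell y⟩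
  · obtain ⟨k, hk, hz⟩ := mem_iUnion₂.1 hz
    obtain ⟨y, hy, rfl⟩ := hfin.mem_toFinset.1 hk
    refine hδ₀ (Metric.mem_thickening_iff.2 ⟨y, hy, ?_⟩)
    have h1 := hcell y
    rw [Real.dist_eq, abs_lt]
    constructor <;> linarith [h1.1, h1.2, hz.1, hz.2]

lemma exists_outer [T2Space X] [LocallyCompactSpace X] {K : Set X} (hK : IsCompact K) {a : ℝ}
    (ha : τ.toFun K < a) :
    ∃ O, IsOpen O ∧ IsCompact (closure O) ∧ K ⊆ O ∧ τ.toFun O < a := by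
  rw [τ.outer_reg' K hK] at ha
  obtain ⟨B, hB, hAB, -, hB'⟩ := exists_open_between_and_isCompact_closure hK isOpen_univ
    (subset_univ _)
  obtain ⟨_, ⟨O, ⟨h1, h2, h3⟩, rfl⟩, h4⟩ := exists_lt_of_csInf_lt
    (Set.Nonempty.image _
      (⟨B, hB, hB', hAB⟩ : {O : Set X | IsOpen O ∧ IsCompact (closure O) ∧ K ⊆ O}.Nonempty)) ha
  exact ⟨O, h1, h2, h3, h4⟩

lemma exists_inner {O : Set X} (hO : IsOpen O) (hO' : IsCompact (closure O)) {a : ℝ}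
    (ha : a < τ.toFun O) : ∃ K, IsCompact K ∧ K ⊆ O ∧ a < τ.toFun K := by
  rw [τ.inner_reg' O hO hO'] at ha
  obtain ⟨_, ⟨K, ⟨h1, h2⟩, rfl⟩, h4⟩ := exists_lt_of_lt_csSup
    (Set.Nonempty.image _
      (⟨∅, isCompact_empty, empty_subset _⟩ : {K : Set X | IsCompact K ∧ K ⊆ O}.Nonempty)) ha
  exact ⟨K, h1, h2, h4⟩

/-- Outer regularity of the set function `C ↦ τ(f⁻¹ C)` on the line, away from `0`. -/
lemma exists_nhd [T2Space X] [LocallyCompactSpace X] (f : C_c(X, ℝ)) {C : Set ℝ}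
    (hC : IsCompact C) (h0 : (0 : ℝ) ∉ C) {a : ℝ} (ha : τ.toFun (f ⁻¹' C) < a) :
    ∃ U, IsOpen U ∧ C ⊆ U ∧ (0 : ℝ) ∉ U ∧
      ∀ D, IsClosed D → D ⊆ U → τ.toFun (f ⁻¹' D) < a := by
  obtain ⟨O, hO, hO', hKO, hlt⟩ := exists_outer τ (pre_compact f hC.isClosed h0) ha
  -- `f` maps `tsupport f \ O` onto a compact set missing `C`.
  have hD : IsCompact (f '' (tsupport f \ O)) :=
    (f.hasCompactSupport.isCompact.diff hO).image f.continuous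
  refine ⟨(f '' (tsupport f \ O))ᶜ ∩ {0}ᶜ, hD.isClosed.isOpen_compl.inter isOpen_compl_singleton,
    fun y hy => ⟨?_, fun h => h0 (h ▸ hy)⟩, fun h => h.2 rfl, fun D hD hDU => ?_⟩
  · rintro ⟨x, hx, rfl⟩
    exact hx.2 (hKO hy)
  · refine lt_of_le_of_lt (τ.mono' _ _ (Or.inl (pre_compact f hD fun h => (hDU h).2 rfl))
      (Or.inr ⟨hO, hO'⟩) fun x hx => ?_) hlt
    by_contra hxO
    have h1 := hDU hx
    exact h1.1 ⟨x, ⟨subset_tsupport _ h1.2, hxO⟩, rfl⟩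

/-- Topological measures need not be subadditive, but their push-forwards to the line are. -/
lemma t_subadd [T2Space X] [LocallyCompactSpace X] (f : C_c(X, ℝ)) {C₁ C₂ : Set ℝ}
    (h₁ : IsCompact C₁) (h₂ : IsCompact C₂) (h₁0 : (0 : ℝ) ∉ C₁) (h₂0 : (0 : ℝ) ∉ C₂) :
    τ.toFun (f ⁻¹' (C₁ ∪ C₂)) ≤ τ.toFun (f ⁻¹' C₁) + τ.toFun (f ⁻¹' C₂) := by
  refine le_of_forall_pos_le_add fun ε hε => ?_
  obtain ⟨U₁, hU₁, hCU₁, h01, hb₁⟩ := exists_nhd τ f h₁ h₁0 (lt_add_of_pos_right _ (half_pos hε))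
  obtain ⟨U₂, hU₂, hCU₂, h02, hb₂⟩ := exists_nhd τ f h₂ h₂0 (lt_add_of_pos_right _ (half_pos hε))
  obtain ⟨d₁, hd₁, H₁⟩ := exists_cells h₁ hU₁ hCU₁
  obtain ⟨d₂, hd₂, H₂⟩ := exists_cells h₂ hU₂ hCU₂
  obtain ⟨δ, hδ, hδ'⟩ := exists_between (lt_min hd₁ hd₂)
  obtain ⟨J₁, hCJ₁, hJU₁⟩ := H₁ δ hδ (hδ'.trans_le (min_le_left _ _))
  obtain ⟨J₂, hCJ₂, hJU₂⟩ := H₂ δ hδ (hδ'.trans_le (min_le_right _ _))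
  have b₁ := hb₁ _ (isClosed_cells δ J₁) hJU₁
  have b₂ := hb₂ _ (isClosed_cells δ J₂) hJU₂
  have n₁ : (0 : ℝ) ∉ cells δ J₁ := fun h => h01 (hJU₁ h)
  have n₂ : (0 : ℝ) ∉ cells δ J₂ := fun h => h02 (hJU₂ h)
  have n : (0 : ℝ) ∉ cells δ (J₁ ∪ J₂) := by
    rw [cells_union]; rintro (h | h); exacts [n₁ h, n₂ h]
  have n' : (0 : ℝ) ∉ C₁ ∪ C₂ := by rintro (h | h); exacts [h₁0 h, h₂0 h]
  have hle : τ.toFun (f ⁻¹' (C₁ ∪ C₂)) ≤ τ.toFun (f ⁻¹' cells δ (J₁ ∪ J₂)) := by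
    refine τ.mono' _ _ (Or.inl (pre_compact f (h₁.union h₂).isClosed n'))
      (Or.inl (pre_compact f (isClosed_cells _ _) n)) (preimage_mono ?_)
    rw [cells_union]; exact union_subset_union hCJ₁ hCJ₂
  have hsum : ∀ (A B : Finset ℤ) (F : ℤ → ℝ), (∀ k, 0 ≤ F k) →
      ∑ k ∈ A ∪ B, F k ≤ ∑ k ∈ A, F k + ∑ k ∈ B, F k := by
    intro A B F hF
    rw [← Finset.sum_union_inter]
    exact le_add_of_nonneg_right (Finset.sum_nonneg fun k _ => hF k)
  have hsplit : τ.toFun (f ⁻¹' cells δ (J₁ ∪ J₂)) ≤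
      τ.toFun (f ⁻¹' cells δ J₁) + τ.toFun (f ⁻¹' cells δ J₂) := by
    rw [t_cells τ f hδ _ n, t_cells τ f hδ _ n₁, t_cells τ f hδ _ n₂, Finset.image_union,
      Finset.union_union_union_comm]
    have s1 := hsum J₁ J₂ (fun k => τ.toFun (f ⁻¹' Ioo ((k : ℝ) * δ) (((k : ℝ) + 1) * δ)))
      fun k => τ.nonneg' _
    have s2 := hsum (J₁ ∪ J₁.image (· + 1)) (J₂ ∪ J₂.image (· + 1))
      (fun k => τ.toFun (f ⁻¹' {(k : ℝ) * δ})) fun k => τ.nonneg' _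
    linarith
  linarith

/-- The punctured line. -/
abbrev PLine : Type := {y : ℝ // y ≠ 0}

lemma zero_notMem_image (S : Set PLine) : (0 : ℝ) ∉ Subtype.val '' S := by
  rintro ⟨y, -, hy⟩; exact y.2 hy

lemma isCompact_image (K : Compacts PLine) : IsCompact (Subtype.val '' (K : Set PLine) : Set ℝ) :=
  K.isCompact.image continuous_subtype_val

lemma adm_image (f : C_c(X, ℝ)) (K : Compacts PLine) :
    f ⁻¹' (Subtype.val '' (K : Set PLine)) ∈ Admissible X :=
  Or.inl (pre_compact f (isCompact_image K).isClosed (zero_notMem_image _))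

/-- The content `C ↦ τ(f⁻¹ C)` on the punctured line. -/
def pushContent [T2Space X] [LocallyCompactSpace X] (f : C_c(X, ℝ)) : Content PLine where
  toFun K := (τ.toFun (f ⁻¹' (Subtype.val '' (K : Set PLine)))).toNNReal
  mono' K L h := Real.toNNReal_le_toNNReal (τ.mono' _ _ (adm_image f K) (adm_image f L)
    (preimage_mono (image_mono h)))
  sup_disjoint' K L h _ _ := by
    rw [← Real.toNNReal_add (τ.nonneg' _) (τ.nonneg' _),
      ← τ.additive' _ _ (adm_image f K) (adm_image f L), Compacts.coe_sup, image_union,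
      preimage_union]
    · rw [← preimage_union, ← image_union, ← Compacts.coe_sup]; exact adm_image f _
    · exact Disjoint.preimage _ ((disjoint_image_iff Subtype.val_injective).2 h)
  sup_le' K L := by
    rw [← Real.toNNReal_add (τ.nonneg' _) (τ.nonneg' _), Compacts.coe_sup, image_union]
    exact Real.toNNReal_le_toNNReal (t_subadd τ f (isCompact_image K) (isCompact_image L)
      (zero_notMem_image _) (zero_notMem_image _))

/-- The distribution of `f` is a genuine measure on the punctured line. -/
lemma exists_measure [T2Space X] [LocallyCompactSpace X] (f : C_c(X, ℝ)) :
    ∃ μ : Measure PLine, ∀ V : Set ℝ, IsOpen V → (0 : ℝ) ∉ V →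
      μ (Subtype.val ⁻¹' V) = ENNReal.ofReal (τ.toFun (f ⁻¹' V)) := by
  refine ⟨(pushContent τ f).measure, fun V hV h0 => ?_⟩
  have hV' : IsOpen (Subtype.val ⁻¹' V : Set PLine) := hV.preimage continuous_subtype_val
  obtain ⟨a1, a2⟩ := pre_open f hV h0
  rw [Content.measure_apply _ hV'.measurableSet, Content.outerMeasure_of_isOpen _ _ hV']
  refine le_antisymm ?_ ?_
  · refine iSup₂_le fun K hK => ?_
    rw [pushContent, Content.mk_apply]
    refine ENNReal.ofReal_le_ofReal (τ.mono' _ _ (adm_image f K) (Or.inr ⟨a1, a2⟩) ?_)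
    rintro x ⟨y, hy, hyx⟩
    have : (y : ℝ) ∈ V := hK hy
    change f x ∈ V
    rwa [← hyx]
  · refine le_of_forall_lt fun a ha => ?_
    have ha' : a ≠ ∞ := (ha.trans ENNReal.ofReal_lt_top).ne
    rw [ENNReal.lt_ofReal_iff_toReal_lt ha'] at ha
    obtain ⟨K, hK, hKV, hlt⟩ := exists_inner τ a1 a2 ha
    have hfK : IsCompact (f '' K) := hK.image f.continuous
    have hfV : f '' K ⊆ V := image_subset_iff.2 hKV
    have hr : f '' K ⊆ range (Subtype.val : PLine → ℝ) := fun y hy =>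
      ⟨⟨y, fun h => h0 (h ▸ hfV hy)⟩, rfl⟩
    let L : Compacts PLine := ⟨Subtype.val ⁻¹' (f '' K),
      (Topology.IsInducing.subtypeVal.isCompact_preimage_iff hr).2 hfK⟩
    have hL : Subtype.val '' (L : Set PLine) = f '' K := image_preimage_eq_of_subset hr
    refine lt_of_lt_of_le ?_ (Content.le_innerContent _ L _ fun y hy => hfV hy)
    rw [pushContent, Content.mk_apply]
    change a < ENNReal.ofReal _
    rw [ENNReal.lt_ofReal_iff_toReal_lt ha', hL]
    refine hlt.trans_le (τ.mono' _ _ (Or.inl hK) ?_ (subset_preimage_image f K))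
    rw [← hL]; exact adm_image f L

/-! ### The quasi-integral of a topological measure -/

/-- The layer-cake integral `∫₀^∞ τ({g > t}) dt` of the positive part of `g`, in `[0, ∞]`. -/
def posInt (g : C_c(X, ℝ)) : ℝ≥0∞ := ∫⁻ t in Ioi (0 : ℝ), ENNReal.ofReal (τ.toFun {x | t < g x})

/-- The functional `g ↦ ∫₀^∞ τ({g > t}) dt - ∫₀^∞ τ({g < -t}) dt`. -/
def integ (g : C_c(X, ℝ)) : ℝ := (posInt τ g).toReal - (posInt τ (-g)).toReal

lemma superlevel (g : C_c(X, ℝ)) {t : ℝ} (ht : 0 < t) : {x | t < g x} ∈ Admissible X :=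
  Or.inr (pre_open g (U := Ioi t) isOpen_Ioi (by simpa using ht.le))

/-- If `μ` is the distribution of `f`, the layer-cake formula expresses `posInt τ (φ ∘ f)` as an
integral over `μ`. -/
lemma posInt_comp (f g : C_c(X, ℝ)) {μ : Measure PLine}
    (hμ : ∀ V : Set ℝ, IsOpen V → (0 : ℝ) ∉ V →
      μ (Subtype.val ⁻¹' V) = ENNReal.ofReal (τ.toFun (f ⁻¹' V)))
    (φ : ℝ → ℝ) (hφ : Continuous φ) (h0 : φ 0 = 0) (hg : ∀ x, g x = φ (f x)) :
    posInt τ g = ∫⁻ y : PLine, ENNReal.ofReal (φ y) ∂μ := by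
  have e : ∀ y : PLine, ENNReal.ofReal (φ y) = ENNReal.ofReal (max (φ y) 0) := fun y => by
    rw [ENNReal.ofReal, ENNReal.ofReal, Real.toNNReal, Real.toNNReal]; simp
  simp_rw [e]
  have hm : Measurable fun y : PLine => max (φ y) 0 := by
    have := hφ.measurable; fun_prop
  rw [lintegral_eq_lintegral_meas_lt (f := fun y : PLine => max (φ y) 0) μ
    (Filter.Eventually.of_forall fun y => le_max_right (φ y) 0) hm.aemeasurable]
  refine setLIntegral_congr_fun measurableSet_Ioi fun t ht => ?_
  have ht : 0 < t := ht
  have h1 := hμ {y | t < φ y} (isOpen_lt continuous_const hφ) (by simp [h0, ht.le])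
  have h2 : {y : PLine | t < max (φ y) 0} = Subtype.val ⁻¹' {y | t < φ y} := by
    ext y; simp [ht.not_gt]
  have h3 : {x | t < g x} = f ⁻¹' {y | t < φ y} := by
    ext x; simp [hg]
  simp only [h2, h1, h3]

/-- All functions `φ ∘ f` are integrated against the same measure `μ`, the distribution of `f`;
this is the source of quasi-linearity. -/
lemma integ_comp (f g : C_c(X, ℝ)) {μ : Measure PLine}
    (hμ : ∀ V : Set ℝ, IsOpen V → (0 : ℝ) ∉ V →
      μ (Subtype.val ⁻¹' V) = ENNReal.ofReal (τ.toFun (f ⁻¹' V)))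
    (φ : ℝ → ℝ) (hφ : Continuous φ) (h0 : φ 0 = 0) (hg : ∀ x, g x = φ (f x)) :
    Integrable (fun y : PLine => φ y) μ ∧ integ τ g = ∫ y : PLine, φ y ∂μ := by
  have hI : Integrable (fun y : PLine => φ y) μ := by
    have hfin : IsFiniteMeasure μ := ⟨by
      have := hμ {0}ᶜ isOpen_compl_singleton (by simp)
      have e : (Subtype.val ⁻¹' ({0}ᶜ : Set ℝ) : Set PLine) = univ := by ext y; simpa using y.2
      rw [e] at this; rw [this]; exact ENNReal.ofReal_lt_top⟩
    -- `μ` is concentrated on the range of `f`, where `φ` is bounded.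
    obtain ⟨M, hM⟩ :=
      (f.hasCompactSupport.isCompact_range f.continuous).isBounded.subset_closedBall 0
    obtain ⟨B, hB⟩ := (isCompact_closedBall (0 : ℝ) M).exists_bound_of_continuousOn hφ.continuousOn
    refine Integrable.of_bound (hφ.measurable.comp measurable_subtype_coe).aestronglyMeasurable B ?_
    have hz := hμ ((Metric.closedBall 0 M)ᶜ ∩ {0}ᶜ)
      (Metric.isClosed_closedBall.isOpen_compl.inter isOpen_compl_singleton) (by simp)
    have e : f ⁻¹' ((Metric.closedBall 0 M)ᶜ ∩ {0}ᶜ) = ∅ :=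
      eq_empty_of_forall_notMem fun x hx => hx.1 (hM ⟨x, rfl⟩)
    rw [e, t_empty, ENNReal.ofReal_zero] at hz
    refine measure_mono_null (fun y hy => ?_) hz
    exact ⟨fun h => hy (hB _ h), y.2⟩
  refine ⟨hI, ?_⟩
  rw [integral_eq_lintegral_pos_part_sub_lintegral_neg_part hI, integ,
    posInt_comp τ f g hμ φ hφ h0 hg, posInt_comp τ f (-g) hμ (fun t => - φ t) hφ.neg (by simp [h0])
      (by simp [hg])]

lemma posInt_mono {f g : C_c(X, ℝ)} (h : ∀ x, f x ≤ g x) : posInt τ f ≤ posInt τ g :=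
  setLIntegral_mono' measurableSet_Ioi fun _ ht => ENNReal.ofReal_le_ofReal
    (τ.mono' _ _ (superlevel f ht) (superlevel g ht) fun x hx => lt_of_lt_of_le hx (h x))

lemma integ_le {O : Set X} (hO : IsOpen O) (hO' : IsCompact (closure O)) {g : C_c(X, ℝ)}
    (g1 : ∀ x, g x ≤ 1) (g0 : ∀ x, x ∉ O → g x ≤ 0) : integ τ g ≤ τ.toFun O := by
  have h2 : posInt τ g ≤ ENNReal.ofReal (τ.toFun O) := by
    calc posInt τ g
        ≤ ∫⁻ t in Ioi (0 : ℝ), (Iio (1 : ℝ)).indicator (fun _ => ENNReal.ofReal (τ.toFun O)) t := by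
          refine setLIntegral_mono' measurableSet_Ioi fun t ht => ?_
          have ht : 0 < t := ht
          by_cases h1 : t < 1
          · rw [indicator_of_mem (show t ∈ Iio (1 : ℝ) from h1)]
            refine ENNReal.ofReal_le_ofReal (τ.mono' _ _ (superlevel g ht) (Or.inr ⟨hO, hO'⟩)
              fun x hx => ?_)
            by_contra h
            exact (ht.trans hx).not_ge (g0 x h)
          · have e : {x | t < g x} = ∅ := eq_empty_of_forall_notMem fun x hx =>
              h1 (lt_of_lt_of_le hx (g1 x))
            simp [e, t_empty]
      _ = ENNReal.ofReal (τ.toFun O) := by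
          rw [lintegral_indicator measurableSet_Iio, setLIntegral_const,
            Measure.restrict_apply measurableSet_Iio, Iio_inter_Ioi]
          simp
  have h3 := ENNReal.toReal_mono ENNReal.ofReal_ne_top h2
  rw [ENNReal.toReal_ofReal (τ.nonneg' O)] at h3
  have h4 : 0 ≤ (posInt τ (-g)).toReal := ENNReal.toReal_nonneg
  rw [integ]; linarith

variable [T2Space X] [LocallyCompactSpace X]

lemma posInt_ne_top (g : C_c(X, ℝ)) : posInt τ g ≠ ∞ := by
  obtain ⟨μ, hμ⟩ := exists_measure τ g
  rw [posInt_comp τ g g hμ id continuous_id rfl (by simp)]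
  exact (integ_comp τ g g hμ id continuous_id rfl (by simp)).1.lintegral_lt_top.ne

lemma integ_mono {f g : C_c(X, ℝ)} (h : ∀ x, f x ≤ g x) : integ τ f ≤ integ τ g :=
  sub_le_sub (ENNReal.toReal_mono (posInt_ne_top τ g) (posInt_mono τ h))
    (ENNReal.toReal_mono (posInt_ne_top τ _) (posInt_mono τ fun x => by simpa using h x))

lemma integ_add (f : C_c(X, ℝ)) (φ ψ : ℝ → ℝ) (hφ : Continuous φ) (hψ : Continuous ψ)
    (h0 : φ 0 = 0) (h0' : ψ 0 = 0) (gφ gψ gs : C_c(X, ℝ)) (h1 : ∀ x, gφ x = φ (f x))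
    (h2 : ∀ x, gψ x = ψ (f x)) (h3 : ∀ x, gs x = φ (f x) + ψ (f x)) :
    integ τ gs = integ τ gφ + integ τ gψ := by
  obtain ⟨μ, hμ⟩ := exists_measure τ f
  obtain ⟨i1, e1⟩ := integ_comp τ f gφ hμ φ hφ h0 h1
  obtain ⟨i2, e2⟩ := integ_comp τ f gψ hμ ψ hψ h0' h2
  obtain ⟨-, e3⟩ := integ_comp τ f gs hμ (fun t => φ t + ψ t) (hφ.add hψ) (by simp [h0, h0']) h3
  rw [e1, e2, e3, integral_add i1 i2]

lemma integ_smul (f : C_c(X, ℝ)) (φ : ℝ → ℝ) (hφ : Continuous φ) (h0 : φ 0 = 0) (c : ℝ)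
    (gφ gc : C_c(X, ℝ)) (h1 : ∀ x, gφ x = φ (f x)) (h2 : ∀ x, gc x = c * φ (f x)) :
    integ τ gc = c * integ τ gφ := by
  obtain ⟨μ, hμ⟩ := exists_measure τ f
  obtain ⟨-, e1⟩ := integ_comp τ f gφ hμ φ hφ h0 h1
  obtain ⟨-, e2⟩ := integ_comp τ f gc hμ (fun t => c * φ t) (hφ.const_mul c) (by simp [h0]) h2
  rw [e1, e2, integral_const_mul]

/-- If `u = 1` on the support of `g ≥ 0`, both are functions of `g + u`, so `integ` is additive
on them; this gives the Lipschitz estimate. -/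
lemma integ_le_add {f g u : C_c(X, ℝ)} {ε : ℝ} (g0 : ∀ x, 0 ≤ g x)
    (u0 : ∀ x, 0 ≤ u x) (u1 : ∀ x, u x ≤ 1) (hu : ∀ x, g x = 0 ∨ u x = 1)
    (hfg : ∀ x, f x ≤ g x + ε * u x) : integ τ f ≤ integ τ g + ε * integ τ u := by
  have h1 : integ τ (g + ε • u) = integ τ g + integ τ (ε • u) := by
    refine integ_add τ (g + u) (fun t => max (t - 1) 0) (fun t => ε * max 0 (min t 1))
      (by fun_prop) (by fun_prop) (by simp) (by simp) _ _ _ ?_ ?_ ?_ <;> intro x <;>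
      have h1 := g0 x <;> have h2 := u0 x <;> have h3 := u1 x <;>
      rcases hu x with h | h <;> simp [h, h1, h2, h3]
  have h2 : integ τ (ε • u) = ε * integ τ u :=
    integ_smul τ u id continuous_id rfl ε u _ (by simp) (by simp)
  rw [← h2, ← h1]
  exact integ_mono τ (by simpa using hfg)

lemma integ_lipschitz (K : Set X) (hK : IsCompact K) : ∃ N : ℝ, 0 ≤ N ∧
    ∀ f g : C_c(X, ℝ), tsupport ⇑f ⊆ K → tsupport ⇑g ⊆ K →
      |integ τ f - integ τ g| ≤ N * ⨆ x, |f x - g x| := by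
  obtain ⟨u, u0, u1, uK, -⟩ := urysohn hK isOpen_univ (subset_univ _)
  have z : integ τ 0 = 0 := by
    have := integ_smul τ 0 id continuous_id rfl 0 0 0 (by simp) (by simp)
    simpa using this
  have hu : 0 ≤ integ τ u := by rw [← z]; exact integ_mono τ (by simpa using u0)
  have hparts : ∀ f : C_c(X, ℝ), integ τ f =
      integ τ (post f (fun t => max t 0) (by fun_prop) (by simp)) -
      integ τ (post f (fun t => max (-t) 0) (by fun_prop) (by simp)) := by
    intro f
    rw [sub_eq_add_neg, ← neg_one_mul, ← integ_smul τ f (fun t => max (-t) 0) (by fun_prop)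
      (by simp) (-1) _ (post f (fun t => - max (-t) 0) (by fun_prop) (by simp)) (by simp)
      (by simp)]
    refine integ_add τ f (fun t => max t 0) (fun t => - max (-t) 0) (by fun_prop)
      (by fun_prop) (by simp) (by simp) _ _ _ (by simp) (by simp) ?_
    intro x
    have := max_zero_sub_max_neg_zero_eq_self (f x)
    simp only [← sub_eq_add_neg]; exact this.symm
  have one : ∀ f g : C_c(X, ℝ), tsupport ⇑f ⊆ K → tsupport ⇑g ⊆ K →
      integ τ f - integ τ g ≤ 2 * integ τ u * ⨆ x, |f x - g x| := by
    intro f g hf hg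
    set ε := ⨆ x, |f x - g x|
    have hε0 : 0 ≤ ε := Real.iSup_nonneg fun x => abs_nonneg _
    have hb : ∀ x, |f x - g x| ≤ ε := by
      intro x
      refine le_ciSup (f := fun x => |f x - g x|) ?_ x
      obtain ⟨M, hM⟩ :=
        ((f - g).hasCompactSupport.isCompact_range (f - g).continuous).isBounded.subset_closedBall 0
      refine ⟨M, ?_⟩
      rintro _ ⟨y, rfl⟩
      simpa using hM ⟨y, rfl⟩
    have h1 := integ_le_add τ (f := post f (fun t => max t 0) (by fun_prop) (by simp))
      (g := post g (fun t => max t 0) (by fun_prop) (by simp)) (u := u) (ε := ε)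
      (fun x => by simp) u0 u1 (fun x => ?_) fun x => ?_
    · have h2 := integ_le_add τ (f := post g (fun t => max (-t) 0) (by fun_prop) (by simp))
        (g := post f (fun t => max (-t) 0) (by fun_prop) (by simp)) (u := u) (ε := ε)
        (fun x => by simp) u0 u1 (fun x => ?_) fun x => ?_
      · rw [hparts f, hparts g]; linarith
      · by_cases hx : x ∈ K
        · exact Or.inr (uK x hx)
        · left; simp [eq_zero_of_notMem hf hx]
      · simp only [post_apply]
        by_cases hx : x ∈ K
        · rw [uK x hx, mul_one]
          have := abs_le.1 (hb x)
          refine max_le ?_ (add_nonneg (le_max_right _ _) hε0)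
          linarith [le_max_left (-f x) 0]
        · simp [eq_zero_of_notMem hf hx, eq_zero_of_notMem hg hx, mul_nonneg hε0 (u0 x)]
    · by_cases hx : x ∈ K
      · exact Or.inr (uK x hx)
      · left; simp [eq_zero_of_notMem hg hx]
    · simp only [post_apply]
      by_cases hx : x ∈ K
      · rw [uK x hx, mul_one]
        have := abs_le.1 (hb x)
        refine max_le ?_ (add_nonneg (le_max_right _ _) hε0)
        linarith [le_max_left (g x) 0]
      · simp [eq_zero_of_notMem hf hx, eq_zero_of_notMem hg hx, mul_nonneg hε0 (u0 x)]
  refine ⟨2 * integ τ u, by linarith, fun f g hf hg => ?_⟩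
  rw [abs_le]
  have h1 := one f g hf hg
  have h2 := one g f hg hf
  simp_rw [abs_sub_comm (g _) (f _)] at h2
  constructor <;> linarith

/-- The quasi-integral with respect to a topological measure. -/
def integral : QuasiIntegral X where
  toFun := integ τ
  mono' _ _ h := integ_mono τ h
  lipschitz' := integ_lipschitz τ
  quasilin_add' := integ_add τ
  quasilin_smul' := integ_smul τ

lemma le_integ {K : Set X} (hK : IsCompact K) {g : C_c(X, ℝ)} (g0 : ∀ x, 0 ≤ g x)
    (g1 : ∀ x ∈ K, 1 ≤ g x) : τ.toFun K ≤ integ τ g := by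
  have h1 : posInt τ (-g) = 0 := by
    have : posInt τ (-g) ≤ posInt τ 0 := posInt_mono τ (by simpa using g0)
    refine le_antisymm (this.trans (le_of_eq ?_)) bot_le
    refine (setLIntegral_congr_fun measurableSet_Ioi (g := fun _ => 0) fun t ht => ?_).trans
      (by simp)
    have ht : 0 < t := ht
    simp [ht.not_gt, t_empty]
  have h2 : ENNReal.ofReal (τ.toFun K) ≤ posInt τ g := by
    calc ENNReal.ofReal (τ.toFun K)
        = ∫⁻ _ in Ioo (0 : ℝ) 1, ENNReal.ofReal (τ.toFun K) := by simp
      _ ≤ ∫⁻ t in Ioo (0 : ℝ) 1, ENNReal.ofReal (τ.toFun {x | t < g x}) :=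
          setLIntegral_mono' measurableSet_Ioo fun t ht => ENNReal.ofReal_le_ofReal
            (τ.mono' _ _ (Or.inl hK) (superlevel g ht.1) fun x hx => ht.2.trans_le (g1 x hx))
      _ ≤ posInt τ g := lintegral_mono_set Ioo_subset_Ioi_self
  rw [integ, h1, ENNReal.toReal_zero, sub_zero]
  exact (ENNReal.ofReal_le_iff_le_toReal (posInt_ne_top τ g)).1 h2

lemma induced_integral : inducedSetFun (integral τ) = τ.toFun := by
  have hO : ∀ O, IsOpen O → IsCompact (closure O) → tauOpen (integral τ) O = τ.toFun O := by
    intro O hO hO'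
    refine le_antisymm (tauOpen_le fun f _ f1 fO => integ_le τ hO hO' f1 fun x hx => (fO x hx).le)
      (le_of_forall_lt_imp_le_of_dense fun a ha => ?_)
    obtain ⟨K, hK, hKO, hlt⟩ := exists_inner τ hO hO' ha
    obtain ⟨u, u0, u1, uK, uO⟩ := urysohn hK hO hKO
    exact hlt.le.trans ((le_integ τ hK u0 fun x hx => (uK x hx).ge).trans
      (le_tauOpen (ζ := integral τ) hO' u1 fun x hx => (uO x hx).le))
  funext A
  by_cases hA : IsCompact A
  · rw [ind_compact hA]
    refine le_antisymm (le_of_forall_gt_imp_ge_of_dense fun a ha => ?_)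
      (le_tauCompact hA fun f f0 f1 => le_integ τ hA f0 f1)
    obtain ⟨O, h1, h2, h3, h4⟩ := exists_outer τ hA ha
    refine (tauCompact_le_tauOpen hA h1 h2 h3).trans ?_
    rw [hO O h1 h2]; exact h4.le
  by_cases hA' : IsOpen A ∧ IsCompact (closure A)
  · rw [ind_open hA'.1 hA'.2, hO A hA'.1 hA'.2]
  · rw [τ.zero_of_not_mem' A (by rintro (h | h); exacts [hA h, hA' h])]
    simp [inducedSetFun, hA, hA']

end Distribution

end RepThm

/-- Representation Theorem: the map `ζ ↦ τ_ζ` is a bijection from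
quasi-integrals on `X` onto topological measures on `X`: the induced set function
of every quasi-integral is a topological measure, and every topological measure
is the induced set function of a unique quasi-integral. -/
theorem representation_theorem {X : Type*} [TopologicalSpace X]
    [T2Space X] [LocallyCompactSpace X] :
    (∀ ζ : QuasiIntegral X, ∃ τ : TopMeasure X, τ.toFun = inducedSetFun ζ) ∧
    (∀ τ : TopMeasure X, ∃! ζ : QuasiIntegral X, inducedSetFun ζ = τ.toFun) := by
  refine ⟨fun ζ => ⟨RepThm.inducedTop ζ, rfl⟩, fun τ =>
    ⟨RepThm.integral τ, RepThm.induced_integral τ, fun ζ hζ => ?_⟩⟩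
  exact RepThm.induced_injective (hζ.trans (RepThm.induced_integral τ).symm)

end
end
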